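/- arXiv:1601.06501 — 3 statements merged into one kernel-verified Lean document; each statement's English description precedes it below -/
import Mathlib

section
/- Let s ∈ ℕ and α = 2, let β, g ∈ ℕ with β ≥ 4, g ≥ 4s and g ≥ ⌊s(β−1)/2⌋, and let b ≥ βgs be a prime. Then there exists a constant A > 0 (depending only on β, b, s) such that for every w ∈ ℕ, the digital net P ⊂ [0,1)^s of the paper's construction, of cardinality N = b^{gw}, satisfies ∑_{k ∈ ℕ₀^s \ {0,...,b^{βgw}−1}^s} ∑_{l ∈ P∞⊥ \ {0}} |K̂_{2,s}(k,l)| ≤ A · (log N)^{2s+1} / N^{6}. -/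
open scoped BigOperators

/-- The `i`-th digit (starting from `i = 0`) of the `b`-adic expansion of `k`. -/
def bdigit (b k i : ℕ) : ℕ := k / b ^ i % b

/-- The set of indices of nonzero `b`-adic digits of `k`. -/
def bsupp (b k : ℕ) : Finset ℕ := (Finset.range (k + 1)).filter fun i => bdigit b k i ≠ 0

/-- The Hamming metric `κ(k)`: the number of nonzero `b`-adic digits of `k`. -/
def hamming (b k : ℕ) : ℕ := (bsupp b k).card

/-- The Dick metric `μ_α(k)`: the sum of the `min(v, α)` largest exponents-plus-one
`a_1 > a_2 > ⋯` of the nonzero `b`-adic digits of `k`. -/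
def dick (b α k : ℕ) : ℕ := ((((bsupp b k).sort (· ≤ ·)).reverse.take α).map (· + 1)).sum

/-- Digitwise addition `k ⊕ l` modulo `b` of the `b`-adic digits. -/
def dadd (b k l : ℕ) : ℕ :=
  ∑ i ∈ Finset.range (k + l + 1), (bdigit b k i + bdigit b l i) % b * b ^ i

/-- Digitwise subtraction `k ⊖ l` modulo `b` of the `b`-adic digits. -/
def dsub (b k l : ℕ) : ℕ :=
  ∑ i ∈ Finset.range (k + l + 1), (bdigit b k i + (b - bdigit b l i)) % b * b ^ i

/-- Hamming metric of a vector: sum over coordinates. -/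
def hammingVec (b : ℕ) {s : ℕ} (k : Fin s → ℕ) : ℕ := ∑ j, hamming b (k j)

/-- Dick metric of a vector: sum over coordinates. -/
def dickVec (b α : ℕ) {s : ℕ} (k : Fin s → ℕ) : ℕ := ∑ j, dick b α (k j)

/-- The column vector of the first `n` `b`-adic digits of `k`, as a vector over `F_b = ZMod b`. -/
def trv (b n : ℕ) (k : ℕ) : Fin n → ZMod b := fun i => (bdigit b k i.1 : ZMod b)

/-- The dual net `P⊥` of the digital net with generating matrices `C`. -/
def dualNet (b : ℕ) {s n m : ℕ} (C : Fin s → Matrix (Fin n) (Fin m) (ZMod b)) :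
    Set (Fin s → ℕ) :=
  {k | (∀ j, k j < b ^ n) ∧ ∑ j, ((C j).transpose).mulVec (trv b n (k j)) = 0}

/-- The dual net `P∞⊥` of the digital net with generating matrices `C` (no upper bound
on the components of `k`). -/
def dualNetInf (b : ℕ) {s n m : ℕ} (C : Fin s → Matrix (Fin n) (Fin m) (ZMod b)) :
    Set (Fin s → ℕ) :=
  {k | ∑ j, ((C j).transpose).mulVec (trv b n (k j)) = 0}

/-- The `h`-th point of the digital net generated by the matrices `C` over `ZMod b`:
its `j`-th coordinate is `∑_{i=1}^n ξ_i b^{-i}` with `(ξ_1,…,ξ_n)ᵀ = C_j · (η_0,…,η_{m-1})ᵀ`,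
where `η` are the `b`-adic digits of `h`. -/
noncomputable def netPoint (b : ℕ) {s n m : ℕ} (C : Fin s → Matrix (Fin n) (Fin m) (ZMod b))
    (h : ℕ) : Fin s → ℝ :=
  fun j => ∑ i : Fin n,
    (((C j).mulVec (fun v : Fin m => (bdigit b h v.1 : ZMod b)) i).val : ℝ) / (b : ℝ) ^ (i.1 + 1)

/-- Sum of the `α` largest elements of a finite set of (0-based) row indices, counted
1-based, i.e. each index `i` contributes `i + 1`. -/
def topSum (α : ℕ) (R : Finset ℕ) : ℕ := (((R.sort (· ≤ ·)).reverse.take α).map (· + 1)).sum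

/-- The digital net with generating matrices `C_1,…,C_s ∈ F_b^{n×m}` is an order `α`
digital `(t,m,s)`-net: for every choice of rows `i_{j,v_j} < ⋯ < i_{j,1}` from each `C_j`
such that the 1-based indices of the `min(α, v_j)` largest chosen rows of each matrix sum
to at most `αm - t`, the chosen rows are linearly independent over `F_b`. -/
def isOrderNet (b α t m : ℕ) {s n : ℕ} (C : Fin s → Matrix (Fin n) (Fin m) (ZMod b)) : Prop :=
  ∀ R : Fin s → Finset (Fin n),
    (∑ j, topSum α ((R j).image Fin.val)) ≤ α * m - t →
    LinearIndependent (ZMod b) fun p : Σ j : Fin s, {i : Fin n // i ∈ R j} => C p.1 p.2.1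

/-- The minimum Dick metric `μ_α(P)` of the digital net with generating matrices `C`,
namely the minimum of `μ_α(k)` over nonzero elements `k` of the dual net. -/
noncomputable def minDick (b α : ℕ) {s n m : ℕ}
    (C : Fin s → Matrix (Fin n) (Fin m) (ZMod b)) : ℕ :=
  sInf (dickVec b α '' {k | k ∈ dualNet b C ∧ k ≠ 0})

/-- The minimum Hamming metric `κ(P)` of the digital net with generating matrices `C`. -/
noncomputable def minHamming (b : ℕ) {s n m : ℕ}
    (C : Fin s → Matrix (Fin n) (Fin m) (ZMod b)) : ℕ :=
  sInf (hammingVec b '' {k | k ∈ dualNet b C ∧ k ≠ 0})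

/-- The Chen–Skriganov generating matrix (for one coordinate `j`, with row parameters
`βr l = β_{j,l}`): the entry in (1-based) row `u = (l-1)w + i` and column `v` is
`binom(v-1, i-1) · β_{j,l}^{v-i}` (which vanishes when `v < i` since the binomial
coefficient is `0`). Indices here are 0-based. -/
def csMatrix (b w n : ℕ) (βr : ℕ → ZMod b) : Matrix (Fin n) (Fin n) (ZMod b) :=
  Matrix.of fun u v =>
    (Nat.choose v.1 (u.1 % w) : ZMod b) * βr (u.1 / w) ^ (v.1 - u.1 % w)

/-- Dick's digit interlacing composition with interlacing factor `α` applied to the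
generating matrices `C_1,…,C_{αs} ∈ F_b^{m×m}`: the resulting matrices
`D_1,…,D_s ∈ F_b^{αm×m}` are such that the (1-based) `(α(h-1)+i)`-th row of `D_j` is the
`h`-th row of `C_{α(j-1)+i}`. -/
def interlace {R : Type*} (α s m : ℕ) (C : Fin (α * s) → Matrix (Fin m) (Fin m) R) :
    Fin s → Matrix (Fin (α * m)) (Fin m) R :=
  fun j => Matrix.of fun r v =>
    C ⟨α * j.1 + r.1 % α, by
        have hα : 0 < α := by
          rcases Nat.eq_zero_or_pos α with h | h
          · exact absurd r.2 (by simp [h])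
          · exact h
        have h1 : α * (j.1 + 1) ≤ α * s := Nat.mul_le_mul_left α j.2
        have h2 : α * (j.1 + 1) = α * j.1 + α := by ring
        have h3 : r.1 % α < α := Nat.mod_lt _ hα
        omega⟩
      ⟨r.1 / α, by
        have hα : 0 < α := by
          rcases Nat.eq_zero_or_pos α with h | h
          · exact absurd r.2 (by simp [h])
          · exact h
        exact Nat.div_lt_of_lt_mul r.2⟩
      v

open MeasureTheory

/-- The `i`-th (for `i ≥ 1`) `b`-adic digit `ξ_i` of a real number `x ∈ [0,1)`, using the
expansion in which infinitely many digits differ from `b - 1`. -/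
noncomputable def rdigit (b : ℕ) (x : ℝ) (i : ℕ) : ℤ := ⌊x * (b : ℝ) ^ i⌋ % b

/-- The `k`-th `b`-adic Walsh function, `wal_k(x) = ω_b^{κ_0 ξ_1 + κ_1 ξ_2 + ⋯}` where
`ω_b = exp(2π√-1/b)`, `κ` are the `b`-adic digits of `k` and `ξ` those of `x`. -/
noncomputable def walsh (b k : ℕ) (x : ℝ) : ℂ :=
  Complex.exp (2 * (Real.pi : ℂ) * Complex.I / (b : ℂ) *
    ∑ a ∈ Finset.range (k + 1), (bdigit b k a : ℂ) * (rdigit b x (a + 1) : ℂ))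

/-- The `k`-th `b`-adic Walsh function on `[0,1)^s`, `wal_k(x) = ∏_j wal_{k_j}(x_j)`. -/
noncomputable def walshVec (b : ℕ) {s : ℕ} (k : Fin s → ℕ) (x : Fin s → ℝ) : ℂ :=
  ∏ j, walsh b (k j) (x j)

/-- The Bernoulli polynomial `B_r` evaluated at a real number. -/
noncomputable def bernoulliPoly (r : ℕ) (x : ℝ) : ℝ := Polynomial.aeval x (Polynomial.bernoulli r)

/-- The reproducing kernel `K_α` of the Sobolev space `H_α`:
`K_α(x,y) = ∑_{r=0}^{α} B_r(x)B_r(y)/(r!)² + (-1)^{α+1} B_{2α}(|x-y|)/(2α)!`. -/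
noncomputable def Kker (α : ℕ) (x y : ℝ) : ℝ :=
  ∑ r ∈ Finset.range (α + 1), bernoulliPoly r x * bernoulliPoly r y / ((r.factorial : ℝ)) ^ 2
    + (-1 : ℝ) ^ (α + 1) * bernoulliPoly (2 * α) |x - y| / ((2 * α).factorial : ℝ)

/-- The `(k,l)`-th Walsh coefficient of the kernel `K_α`. -/
noncomputable def Khat (b α : ℕ) (k l : ℕ) : ℂ :=
  ∫ x in Set.Ico (0 : ℝ) 1, ∫ y in Set.Ico (0 : ℝ) 1,
    (Kker α x y : ℂ) * (starRingEnd ℂ) (walsh b k x) * walsh b l y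

/-- The `(k,l)`-th Walsh coefficient of the `s`-variate kernel
`K_{α,s}(x,y) = ∏_j K_α(x_j, y_j)`. -/
noncomputable def KhatS (b α s : ℕ) (k l : Fin s → ℕ) : ℂ :=
  ∫ x in Set.univ.pi fun _ : Fin s => Set.Ico (0 : ℝ) 1,
    ∫ y in Set.univ.pi fun _ : Fin s => Set.Ico (0 : ℝ) 1,
      ((∏ j, Kker α (x j) (y j) : ℝ) : ℂ) * (starRingEnd ℂ) (walshVec b k x) * walshVec b l y

/-- The `k`-th Walsh coefficient `b̂_r(k)` of the normalized Bernoulli polynomial `B_r/r!`. -/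
noncomputable def bhat (b r k : ℕ) : ℂ :=
  ∫ x in Set.Ico (0 : ℝ) 1,
    ((bernoulliPoly r x / (r.factorial : ℝ) : ℝ) : ℂ) * (starRingEnd ℂ) (walsh b k x)

/-- The `(k,l)`-th Walsh coefficient `b̂_{r,per}(k,l)` of `(x,y) ↦ B̃_r(x-y)/r!`, where
`B̃_r` is the 1-periodic extension of the Bernoulli polynomial `B_r` from `[0,1)` to `ℝ`. -/
noncomputable def bhatPer (b r : ℕ) (k l : ℕ) : ℂ :=
  ∫ x in Set.Ico (0 : ℝ) 1, ∫ y in Set.Ico (0 : ℝ) 1,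
    ((bernoulliPoly r (Int.fract (x - y)) / (r.factorial : ℝ) : ℝ) : ℂ) *
      (starRingEnd ℂ) (walsh b k x) * walsh b l y

/-!
For `α = 2`, Taylor's formula with integral remainder writes the kernel as an integral
`K₂(x, y) = ∫ t in 0..1, ∑ i, φᵢ(t, x) φᵢ(t, y)` of three continuous piecewise-linear features, one
of them the Peano kernel. Integrating a Walsh function twice shows that the Walsh coefficients of
`φᵢ(t, ·)` are `O(b ^ (-μ₂(k)))`, so `|K̂₂(k, l)| ≲ b ^ (-μ₂(k) - μ₂(l))` and the double sum is at
most a product of two single sums. With `m = gw` and `n = βgw`: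

* some coordinate of a frequency outside the box has `μ₁ > n`, which gives a sum `≲ n b ^ (-n)`;
* Hermite interpolation makes any `m` rows of the Chen–Skriganov matrices that form leading
  segments of blocks independent, so a dual vector is determined by few of its digits; counting
  dual vectors by the positions of their two top digits gives a sum `≲ m ^ (2s) b ^ (-2m)`.

As `n = βm`, the product is `≲ (log N) ^ (2s + 1) N ^ (-(β + 2))`, and `β + 2 ≥ 6`.
-/

section Digits

variable {b : ℕ}

lemma bdigit_lt (hb : 0 < b) (k i : ℕ) : bdigit b k i < b := Nat.mod_lt _ hb

lemma bdigit_ext (hb : 1 < b) {k l : ℕ} (h : ∀ i, bdigit b k i = bdigit b l i) : k = l := by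
  have mod_eq : ∀ n, k % b ^ n = l % b ^ n := by
    intro n
    induction n with
    | zero => simp [Nat.mod_one]
    | succ n ih => rw [Nat.mod_pow_succ, Nat.mod_pow_succ, ih]; exact congrArg _ (congrArg _ (h n))
  have lt_pow : k + l < b ^ (k + l) := Nat.lt_pow_self hb
  have key := mod_eq (k + l)
  rwa [Nat.mod_eq_of_lt (by omega), Nat.mod_eq_of_lt (by omega)] at key

lemma bdigit_mod_pow {n p : ℕ} (k : ℕ) (h : p < n) : bdigit b (k % b ^ n) p = bdigit b k p := by
  obtain ⟨r, rfl⟩ := Nat.exists_eq_add_of_lt h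
  rw [bdigit, bdigit, show b ^ (p + r + 1) = b ^ p * (b * b ^ r) by ring,
    Nat.mod_mul_right_div_self, Nat.mod_mul_right_mod]

lemma bdigit_eq_zero_of_lt {n p k : ℕ} (hb : 1 < b) (hk : k < b ^ n) (h : n ≤ p) :
    bdigit b k p = 0 := by
  rw [bdigit, Nat.div_eq_of_lt (hk.trans_le (Nat.pow_le_pow_right (by omega) h)), Nat.zero_mod]

/-- The position `a₁` (counted from one) of the leading nonzero `b`-adic digit of `k`, equal to the
NRT metric `μ₁(k)`; it is `0` for `k = 0`. -/
def lead (b k : ℕ) : ℕ := (Nat.digits b k).length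

/-- What remains of `k` after its leading nonzero `b`-adic digit is deleted. -/
def tail (b k : ℕ) : ℕ := k % b ^ (lead b k - 1)

/-- The position `a₂` (counted from one) of the second nonzero `b`-adic digit of `k` from the top,
equal to `0` if there is none; thus `lead b k + lead₂ b k` is the Dick metric `μ₂(k)`. -/
def lead₂ (b k : ℕ) : ℕ := lead b (tail b k)

lemma lt_lead_iff (hb : 1 < b) {k i : ℕ} : i < lead b k ↔ b ^ i ≤ k := Nat.lt_digits_length_iff hb k

lemma lead_le_iff (hb : 1 < b) {k i : ℕ} : lead b k ≤ i ↔ k < b ^ i := Nat.digits_length_le_iff hb k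

lemma lt_pow_lead (hb : 1 < b) (k : ℕ) : k < b ^ lead b k := (lead_le_iff hb).1 le_rfl

lemma lead_pos (hb : 1 < b) {k : ℕ} (hk : k ≠ 0) : 0 < lead b k := by
  rw [lt_lead_iff hb, pow_zero]; omega

lemma tail_lt (hb : 1 < b) (k : ℕ) : tail b k < b ^ (lead b k - 1) := Nat.mod_lt _ (by positivity)

lemma lead₂_le (hb : 1 < b) (k : ℕ) : lead₂ b k ≤ lead b k - 1 := (lead_le_iff hb).2 (tail_lt hb k)

lemma lead₂_le_lead (hb : 1 < b) (k : ℕ) : lead₂ b k ≤ lead b k :=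
  (lead₂_le hb k).trans (Nat.sub_le _ _)

lemma div_lead_lt (hb : 1 < b) (k : ℕ) : k / b ^ (lead b k - 1) < b := by
  refine Nat.div_lt_of_lt_mul ?_
  rw [← pow_succ]
  exact (lt_pow_lead hb k).trans_le (Nat.pow_le_pow_right (by omega) (by omega))

lemma div_lead_pos (hb : 1 < b) {k : ℕ} (hk : k ≠ 0) : 0 < k / b ^ (lead b k - 1) :=
  Nat.div_pos ((lt_lead_iff hb).1 (Nat.sub_lt (lead_pos hb hk) one_pos)) (by positivity)

lemma div_lead_mul_add_tail (b k : ℕ) :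
    k / b ^ (lead b k - 1) * b ^ (lead b k - 1) + tail b k = k := Nat.div_add_mod' _ _

lemma bdigit_eq_zero (hb : 1 < b) {k p : ℕ} (h₂ : lead₂ b k ≤ p) (h₁ : p ≠ lead b k - 1) :
    bdigit b k p = 0 := by
  by_cases h : lead b k ≤ p
  · exact bdigit_eq_zero_of_lt hb (lt_pow_lead hb k) h
  · rw [← bdigit_mod_pow k (show p < lead b k - 1 by omega)]
    exact bdigit_eq_zero_of_lt hb (lt_pow_lead hb _) h₂

end Digits

section Hermite

open Polynomial

variable {F ι : Type*} [Field F]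

lemma hasseDeriv_eval_eq_zero {f : F[X]} {x : F} {q r : ℕ} (h : (X - C x) ^ r ∣ f) (hq : q < r) :
    (hasseDeriv q f).eval x = 0 := by
  obtain ⟨u, rfl⟩ := h
  have taylor_X_sub_C : taylor x (X - C x) = X := by simp
  rw [← taylor_coeff, taylor_mul, taylor_pow, taylor_X_sub_C, coeff_X_pow_mul', if_neg (by omega)]

lemma hasseDeriv_X_sub_C_pow_mul_eval (f : F[X]) (x : F) (q : ℕ) :
    (hasseDeriv q ((X - C x) ^ q * f)).eval x = f.eval x := by
  have taylor_X_sub_C : taylor x (X - C x) = X := by simp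
  rw [← taylor_coeff, taylor_mul, taylor_pow, taylor_X_sub_C, coeff_X_pow_mul', if_pos le_rfl,
    Nat.sub_self, taylor_coeff_zero]

lemma hasseDeriv_eval_eq_sum {f : F[X]} {m : ℕ} (hf : f.natDegree < m) (x : F) (q : ℕ) :
    (hasseDeriv q f).eval x
      = ∑ v : Fin m, f.coeff v.1 * ((Nat.choose v.1 q : F) * x ^ (v.1 - q)) := by
  rw [hasseDeriv_apply, sum_over_range' f (by simp) m hf, eval_finsetSum,
    ← Fin.sum_univ_eq_sum_range (fun i => eval x (monomial (i - q) (↑(i.choose q) * f.coeff i)))]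
  refine Finset.sum_congr rfl fun v _ => ?_
  rw [eval_monomial]
  ring

lemma natDegree_X_sub_C_pow_mul_prod_le {x : ι → F} (r : ι → ℕ) (S : Finset ι) (y : F) (q : ℕ) :
    ((X - C y) ^ q * ∏ i ∈ S, (X - C (x i)) ^ r i).natDegree ≤ q + ∑ i ∈ S, r i := by
  refine natDegree_mul_le.trans (add_le_add ?_ ?_)
  · exact natDegree_pow_le.trans (by simp)
  · exact (natDegree_prod_le _ _).trans
      (Finset.sum_le_sum fun i _ => natDegree_pow_le.trans (by simp))

/-- Hermite interpolation in dual form. A nonzero coefficient of largest order `q` at a node `x i`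
is detected by the polynomial that vanishes to order `q` at `x i` and to order `r i'` at every
other node `x i'`. -/
lemma eq_zero_of_sum_mul_hasseDeriv_eval_eq_zero [Fintype ι] {x : ι → F}
    (hx : Function.Injective x) {r : ι → ℕ} {c : ι → ℕ → F}
    (h : ∀ f : F[X], f.natDegree < ∑ i, r i →
      ∑ i, ∑ q ∈ Finset.range (r i), c i q * (hasseDeriv q f).eval (x i) = 0) :
    ∀ i, ∀ q < r i, c i q = 0 := by
  classical
  by_contra! ⟨i₀, q₁, hq₁, hc₁⟩
  obtain ⟨q₀, hq₀, hmax⟩ := Finset.exists_max_image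
    ((Finset.range (r i₀)).filter fun q => c i₀ q ≠ 0) id ⟨q₁, by simp [hq₁, hc₁]⟩
  simp only [Finset.mem_filter, Finset.mem_range, id] at hq₀ hmax
  set G : F[X] := ∏ i ∈ Finset.univ.erase i₀, (X - C (x i)) ^ r i with hG
  set f : F[X] := (X - C (x i₀)) ^ q₀ * G
  have G_ne_zero : G.eval (x i₀) ≠ 0 := by
    simp only [hG, eval_prod, eval_pow, eval_sub, eval_X, eval_C]
    exact Finset.prod_ne_zero_iff.2 fun i hi =>
      pow_ne_zero _ (sub_ne_zero.2 fun e => Finset.ne_of_mem_erase hi (hx e).symm)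
  have natDegree_lt : f.natDegree < ∑ i, r i := by
    rw [← Finset.add_sum_erase _ r (Finset.mem_univ i₀)]
    exact (natDegree_X_sub_C_pow_mul_prod_le _ _ _ _).trans_lt (by gcongr; exact hq₀.1)
  have other_nodes : ∀ i, i ≠ i₀ → ∀ q < r i, (hasseDeriv q f).eval (x i) = 0 := fun i hi q =>
    hasseDeriv_eval_eq_zero ((Finset.dvd_prod_of_mem (fun i => (X - C (x i)) ^ r i)
      (Finset.mem_erase.2 ⟨hi, Finset.mem_univ i⟩)).mul_left _)
  have pairing := h f natDegree_lt
  rw [Finset.sum_eq_single_of_mem i₀ (Finset.mem_univ _) fun i _ hi => Finset.sum_eq_zero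
      fun q hq => by rw [other_nodes i hi q (Finset.mem_range.1 hq), mul_zero],
    Finset.sum_eq_single_of_mem q₀ (Finset.mem_range.2 hq₀.1) fun q hq hne => ?_,
    hasseDeriv_X_sub_C_pow_mul_eval] at pairing
  · exact mul_ne_zero hq₀.2 G_ne_zero pairing
  · rcases lt_or_gt_of_ne hne with hlt | hgt
    · rw [hasseDeriv_eval_eq_zero (dvd_mul_right _ _) hlt, mul_zero]
    · by_cases hc : c i₀ q = 0
      · rw [hc, zero_mul]
      · exact absurd (hmax q ⟨Finset.mem_range.1 hq, hc⟩) hgt.not_ge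

end Hermite

section DualNet

open Polynomial

/-- The nodes `x j l` with `j < n` and `l < g` are pairwise distinct. -/
def DistinctNodes {F : Type*} (x : ℕ → ℕ → F) (n g : ℕ) : Prop :=
  ∀ j l j' l', j < n → l < g → j' < n → l' < g → x j l = x j' l' → j = j' ∧ l = l'

/-- The dual net `P∞⊥` of the paper's construction: the Chen–Skriganov matrices with nodes `βe`,
interlaced with factor `β`. -/
def csDual (b s β g w : ℕ) (βe : ℕ → ℕ → ZMod b) : Set (Fin s → ℕ) :=
  dualNetInf b (interlace β s (g * w) fun j => csMatrix b w (g * w) (βe j.1))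

variable {b s β g w : ℕ} {βe : ℕ → ℕ → ZMod b}

lemma sum_range_mul {M : Type*} [AddCommMonoid M] (m n : ℕ) (F : ℕ → M) :
    ∑ p ∈ Finset.range (m * n), F p
      = ∑ d ∈ Finset.range n, ∑ e ∈ Finset.range m, F (m * d + e) := by
  induction n with
  | zero => simp
  | succ n ih => rw [Nat.mul_succ, Finset.sum_range_add, ih, Finset.sum_range_succ]

lemma sum_range_min_sub_mul (w H g : ℕ) :
    ∑ L ∈ Finset.range g, min w (H - w * L) = min (w * g) H := by
  induction g with
  | zero => simp
  | succ g ih => rw [Finset.sum_range_succ, ih, Nat.mul_succ]; omega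

lemma zero_mem_csDual : 0 ∈ csDual b s β g w βe := by
  have trv_zero : trv b (β * (g * w)) 0 = 0 := by funext i; simp [trv, bdigit]
  simp [csDual, dualNetInf, trv_zero]

/-- Row `β * (w * L + q) + i` of the `j`-th interlaced matrix, paired with the coefficients of `f`,
evaluates the `q`-th Hasse derivative of `f` at the node `βe (β * j + i) L`. -/
lemma sum_bdigit_mul_hasseDeriv_eval [Fact b.Prime] {l : Fin s → ℕ}
    (hl : l ∈ csDual b s β g w βe) {f : (ZMod b)[X]} (hf : f.natDegree < g * w) :
    ∑ j, ∑ p ∈ Finset.range (β * (g * w)), (bdigit b (l j) p : ZMod b) *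
      (hasseDeriv (p / β % w) f).eval (βe (β * j.1 + p % β) (p / β / w)) = 0 := by
  have column : ∀ v : Fin (g * w), ∑ j, ∑ p : Fin (β * (g * w)),
      ((Nat.choose v.1 (p.1 / β % w) : ZMod b)
        * βe (β * j.1 + p.1 % β) (p.1 / β / w) ^ (v.1 - p.1 / β % w))
        * (bdigit b (l j) p.1 : ZMod b) = 0 := by
    intro v
    have := congrFun hl v
    rwa [Finset.sum_apply] at this
  simp only [← Fin.sum_univ_eq_sum_range, hasseDeriv_eval_eq_sum hf, Finset.mul_sum]
  rw [Finset.sum_congr rfl fun j _ => Finset.sum_comm, Finset.sum_comm]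
  refine Finset.sum_eq_zero fun v _ => ?_
  rw [← mul_zero (f.coeff v.1), ← column v, Finset.mul_sum]
  refine Finset.sum_congr rfl fun j _ => ?_
  rw [Finset.mul_sum]
  exact Finset.sum_congr rfl fun p _ => by ring

lemma sum_bdigit_mul_hasseDeriv_eval_nodes [Fact b.Prime] {l : Fin s → ℕ}
    (hβ : 0 < β) (hw : 0 < w) (hl : l ∈ csDual b s β g w βe) {f : (ZMod b)[X]}
    (hf : f.natDegree < g * w) :
    ∑ z : Fin s × Fin β × Fin g, ∑ q ∈ Finset.range w,
      (bdigit b (l z.1) (β * (w * z.2.2.1 + q) + z.2.1.1) : ZMod b) *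
        (hasseDeriv q f).eval (βe (β * z.1.1 + z.2.1.1) z.2.2.1) = 0 := by
  rw [← sum_bdigit_mul_hasseDeriv_eval hl hf, Fintype.sum_prod_type]
  refine Finset.sum_congr rfl fun j _ => ?_
  rw [Fintype.sum_prod_type_right, mul_comm g w, sum_range_mul, sum_range_mul,
    ← Fin.sum_univ_eq_sum_range (fun L => ∑ q ∈ Finset.range w, ∑ i ∈ Finset.range β, _) g]
  refine Finset.sum_congr rfl fun L _ => ?_
  rw [Finset.sum_comm]
  refine Finset.sum_congr rfl fun q hq => ?_
  rw [← Fin.sum_univ_eq_sum_range]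
  refine Finset.sum_congr rfl fun i _ => ?_
  have hq := Finset.mem_range.1 hq
  rw [Nat.mul_add_mod, Nat.mod_eq_of_lt i.2, Nat.mul_add_div hβ, Nat.div_eq_of_lt i.2, add_zero,
    Nat.mul_add_mod, Nat.mod_eq_of_lt hq, Nat.mul_add_div hw, Nat.div_eq_of_lt hq, add_zero]

lemma DistinctNodes.injective (h : DistinctNodes βe (β * s) g) :
    Function.Injective fun z : Fin s × Fin β × Fin g => βe (β * z.1.1 + z.2.1.1) z.2.2.1 := by
  have lt : ∀ (j : Fin s) (i : Fin β), β * j.1 + i.1 < β * s := fun j i =>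
    calc β * j.1 + i.1 < β * j.1 + β := by gcongr; exact i.2
      _ = β * (j.1 + 1) := by ring
      _ ≤ β * s := Nat.mul_le_mul_left β j.2
  rintro ⟨j, i, L⟩ ⟨j', i', L'⟩ e
  obtain ⟨hrow, hL⟩ := h _ _ _ _ (lt j i) L.2 (lt j' i') L'.2 e
  have hj := congrArg (· / β) hrow
  have hi := congrArg (· % β) hrow
  simp only [Nat.mul_add_div i.pos, Nat.div_eq_of_lt i.2, Nat.div_eq_of_lt i'.2, add_zero,
    Nat.mul_add_mod, Nat.mod_eq_of_lt i.2, Nat.mod_eq_of_lt i'.2] at hj hi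
  rw [Fin.ext hj, Fin.ext hi, Fin.ext hL]

/-- If the first `H j i` rows of the `(β * j + i)`-th Chen–Skriganov matrices are at most `g * w` in
number, then they are linearly independent. -/
lemma bdigit_eq_of_mem_csDual (hb : b.Prime) (hw : 0 < w)
    (hβe : DistinctNodes βe (β * s) g) {H : Fin s → ℕ → ℕ}
    (hH : ∑ j, ∑ i ∈ Finset.range β, H j i ≤ g * w) {l l' : Fin s → ℕ}
    (hl : l ∈ csDual b s β g w βe) (hl' : l' ∈ csDual b s β g w βe)
    (h : ∀ j p, H j (p % β) ≤ p / β → bdigit b (l j) p = bdigit b (l' j) p)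
    (j : Fin s) {i L q : ℕ} (hi : i < β) (hL : L < g) (hq : q < min w (H j i - w * L)) :
    bdigit b (l j) (β * (w * L + q) + i) = bdigit b (l' j) (β * (w * L + q) + i) := by
  have : Fact b.Prime := ⟨hb⟩
  let pos : Fin s × Fin β × Fin g → ℕ → ℕ := fun z q => β * (w * z.2.2.1 + q) + z.2.1.1
  let r : Fin s × Fin β × Fin g → ℕ := fun z => min w (H z.1 z.2.1.1 - w * z.2.2.1)
  let c : Fin s × Fin β × Fin g → ℕ → ZMod b := fun z q =>
    (bdigit b (l z.1) (pos z q) : ZMod b) - bdigit b (l' z.1) (pos z q)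
  have hr : ∑ z, r z ≤ g * w := by
    refine le_trans ?_ hH
    simp only [Fintype.sum_prod_type, r, ← Fin.sum_univ_eq_sum_range]
    gcongr with j _ i _
    rw [Fin.sum_univ_eq_sum_range (fun L => min w (H j i - w * L)), sum_range_min_sub_mul]
    exact min_le_right _ _
  have hc : ∀ z q, q < w → r z ≤ q → c z q = 0 := by
    intro z q hqw hrq
    refine sub_eq_zero.2 (congrArg _ (h z.1 _ ?_))
    rw [Nat.mul_add_mod, Nat.mod_eq_of_lt z.2.1.2, Nat.mul_add_div z.2.1.pos,
      Nat.div_eq_of_lt z.2.1.2]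
    simp only [r] at hrq
    omega
  have key := eq_zero_of_sum_mul_hasseDeriv_eval_eq_zero hβe.injective (r := r) (c := c)
    (fun f hf => ?_) (j, ⟨i, hi⟩, ⟨L, hL⟩) q hq
  · have := (ZMod.natCast_eq_natCast_iff' _ _ _).1 (sub_eq_zero.1 key)
    rwa [Nat.mod_eq_of_lt (bdigit_lt hb.pos _ _), Nat.mod_eq_of_lt (bdigit_lt hb.pos _ _)] at this
  · have hβ : 0 < β := i.zero_le.trans_lt hi
    have pairing := sub_eq_zero.2
      ((sum_bdigit_mul_hasseDeriv_eval_nodes hβ hw hl (hf.trans_le hr)).trans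
        (sum_bdigit_mul_hasseDeriv_eval_nodes hβ hw hl' (hf.trans_le hr)).symm)
    simp only [← Finset.sum_sub_distrib, ← sub_mul] at pairing
    rw [← pairing]
    refine Finset.sum_congr rfl fun z _ => Finset.sum_subset ?_ fun q hqw hqr => ?_
    · exact Finset.range_mono (min_le_left _ _)
    · rw [hc z q (Finset.mem_range.1 hqw) (by simpa using hqr), zero_mul]

lemma eq_of_mem_csDual (hb : b.Prime) (hβ : 0 < β) (hw : 0 < w)
    (hβe : DistinctNodes βe (β * s) g) {H : Fin s → ℕ → ℕ}
    (hH : ∑ j, ∑ i ∈ Finset.range β, H j i ≤ g * w) {l l' : Fin s → ℕ}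
    (hl : l ∈ csDual b s β g w βe) (hl' : l' ∈ csDual b s β g w βe)
    (h : ∀ j p, H j (p % β) ≤ p / β → bdigit b (l j) p = bdigit b (l' j) p) : l = l' := by
  funext j
  refine bdigit_ext hb.one_lt fun p => ?_
  by_cases hp : H j (p % β) ≤ p / β
  · exact h j p hp
  have hi : p % β < β := Nat.mod_lt _ hβ
  have H_le : H j (p % β) ≤ g * w :=
    (Finset.single_le_sum_of_canonicallyOrdered (Finset.mem_range.2 hi)).trans
      ((Finset.single_le_sum_of_canonicallyOrdered (f := fun j => ∑ i ∈ Finset.range β, H j i)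
        (Finset.mem_univ j)).trans hH)
  have hL : p / β / w < g := Nat.div_lt_of_lt_mul (by rw [mul_comm]; omega)
  have hdiv := Nat.div_add_mod (p / β) w
  have hmod := Nat.mod_lt (p / β) hw
  have key := bdigit_eq_of_mem_csDual hb hw hβe hH hl hl' h j hi hL (q := p / β % w)
    (lt_min hmod (by omega))
  rwa [hdiv, Nat.div_add_mod] at key

lemma eq_of_mem_csDual_of_div_eq (hb : b.Prime) (hβ : 0 < β) (hw : 0 < w)
    (hβe : DistinctNodes βe (β * s) g) {f : Fin s → ℕ} (hf : β * ∑ j, f j ≤ g * w)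
    {l l' : Fin s → ℕ} (hl : l ∈ csDual b s β g w βe) (hl' : l' ∈ csDual b s β g w βe)
    (h : ∀ j, l j / b ^ (β * f j) = l' j / b ^ (β * f j)) : l = l' := by
  refine eq_of_mem_csDual hb hβ hw hβe (H := fun j _ => f j) ?_ hl hl' fun j p hp => ?_
  · simpa [Finset.mul_sum] using hf
  · obtain ⟨r, rfl⟩ := Nat.exists_eq_add_of_le (Nat.mul_le_of_le_div _ _ _ hp)
    rw [bdigit, bdigit, pow_add, ← Nat.div_div_eq_div_mul, ← Nat.div_div_eq_div_mul,
      mul_comm (f j) β, h j]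

/-- The numbers of rows needed in the `β` matrices of one coordinate to cover all nonzero digits of
`k`: the leading digit lies in the matrix `(a₁ - 1) % β`, all others lie below `a₂`. -/
lemma two_mul_sum_rows_le (hβ : 2 ≤ β) {a₁ a₂ : ℕ} (h : a₂ ≤ a₁) :
    2 * ∑ i ∈ Finset.range β, (if i = (a₁ - 1) % β then a₁ / β + 1 else a₂ / β + 1)
      ≤ a₁ + a₂ + 2 * β := by
  have hmem : (a₁ - 1) % β ∈ Finset.range β := Finset.mem_range.2 (Nat.mod_lt _ (by omega))
  rw [← Finset.add_sum_erase _ _ hmem, if_pos rfl,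
    Finset.sum_congr rfl fun i hi => if_neg (Finset.ne_of_mem_erase hi), Finset.sum_const,
    Finset.card_erase_of_mem hmem, Finset.card_range, smul_eq_mul]
  have h₁ : a₁ / β * β ≤ a₁ := Nat.div_mul_le_self _ _
  have h₂ : a₂ / β * β ≤ a₂ := Nat.div_mul_le_self _ _
  have h₃ : a₂ / β ≤ a₁ / β := Nat.div_le_div_right h
  obtain ⟨t, rfl⟩ := Nat.exists_eq_add_of_le hβ
  rw [show 2 + t - 1 = t + 1 by omega]
  generalize a₁ / (2 + t) = x at *
  generalize a₂ / (2 + t) = y at *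
  nlinarith [Nat.mul_le_mul_left t h₃]

lemma two_mul_lt_sum_lead_add_lead₂ (hb : b.Prime) (hβ : 2 ≤ β) (hw : 0 < w)
    (hβe : DistinctNodes βe (β * s) g) {l : Fin s → ℕ} (hl : l ∈ csDual b s β g w βe)
    (hl0 : l ≠ 0) :
    2 * (g * w) < ∑ j, (lead b (l j) + lead₂ b (l j)) + 2 * (β * s) := by
  by_contra! hle
  let H : Fin s → ℕ → ℕ := fun j i =>
    if i = (lead b (l j) - 1) % β then lead b (l j) / β + 1 else lead₂ b (l j) / β + 1
  refine hl0 (eq_of_mem_csDual hb (by omega) hw hβe (H := H) ?_ hl zero_mem_csDual fun j p hp => ?_)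
  · have := Finset.sum_le_sum fun j (_ : j ∈ Finset.univ) =>
      two_mul_sum_rows_le hβ (lead₂_le_lead hb.one_lt (l j))
    rw [← Finset.mul_sum, Finset.sum_add_distrib (g := fun _ => 2 * β), Finset.sum_const,
      Finset.card_univ, Fintype.card_fin, smul_eq_mul, mul_left_comm, mul_comm s β] at this
    simp only [H]
    omega
  · have lead_le : lead₂ b (l j) / β ≤ lead b (l j) / β :=
      Nat.div_le_div_right (lead₂_le_lead hb.one_lt _)
    suffices bdigit b (l j) p = 0 by rw [this]; simp [bdigit]
    simp only [H] at hp
    refine bdigit_eq_zero hb.one_lt ?_ ?_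
    · by_contra! hlt
      have := Nat.div_le_div_right (c := β) hlt.le
      split_ifs at hp <;> omega
    · rintro rfl
      rw [if_pos rfl] at hp
      have := Nat.div_le_div_right (c := β) (Nat.sub_le (lead b (l j)) 1)
      omega

end DualNet

section Counting

open scoped ENNReal NNReal

universe u

lemma tsum_comp_le_of_encard_fiber_le {X Y : Type*} (φ : X → Y) (f : Y → ℝ≥0∞) (N : Y → ℕ)
    (hN : ∀ y, (φ ⁻¹' {y}).encard ≤ N y) : ∑' x, f (φ x) ≤ ∑' y, (N y : ℝ≥0∞) * f y := by
  rw [← ENNReal.tsum_fiberwise (fun x => f (φ x)) φ]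
  refine ENNReal.tsum_le_tsum fun y => ?_
  have const_on_fiber : ∀ x : φ ⁻¹' {y}, f (φ x) = f y := fun x => by rw [x.2]
  rw [tsum_congr const_on_fiber, ENNReal.tsum_set_const]
  gcongr
  exact_mod_cast hN y

lemma tsum_pi_prod_le {ι X : Type*} [Fintype ι] (f : ι → X → ℝ≥0∞) :
    ∑' k : ι → X, ∏ j, f j (k j) ≤ ∏ j, ∑' x, f j x := by
  classical
  rw [ENNReal.tsum_eq_iSup_sum]
  refine iSup_le fun S => ?_
  calc ∑ k ∈ S, ∏ j, f j (k j)
      ≤ ∑ k ∈ Fintype.piFinset fun j => S.image fun k => k j, ∏ j, f j (k j) :=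
        Finset.sum_le_sum_of_subset fun k hk =>
          Fintype.mem_piFinset.2 fun j => Finset.mem_image_of_mem _ hk
    _ = ∏ j, ∑ x ∈ S.image (fun k => k j), f j x := (Finset.prod_univ_sum _ _).symm
    _ ≤ ∏ j, ∑' x, f j x := Finset.prod_le_prod' fun j _ => ENNReal.sum_le_tsum _

lemma tsum_pow_mul_geometric_ne_top {r : ℝ≥0∞} (hr : r < 1) (e : ℕ) :
    ∑' n : ℕ, ((n : ℝ≥0∞) + 1) ^ e * r ^ n ≠ ∞ := by
  lift r to ℝ≥0 using hr.ne_top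
  have hr' : ‖(r : ℝ)‖ < 1 := by rw [NNReal.norm_eq]; exact_mod_cast hr
  have hs := summable_descFactorial_mul_geometric_of_norm_lt_one e hr'
  refine ne_top_of_le_ne_top hs.tsum_ofReal_ne_top (ENNReal.tsum_le_tsum fun n => ?_)
  rw [ENNReal.ofReal_mul (by positivity), ENNReal.ofReal_natCast, ENNReal.ofReal_pow r.coe_nonneg,
    ENNReal.ofReal_coe_nnreal, Nat.add_descFactorial_eq_ascFactorial]
  gcongr
  exact_mod_cast (n + 1).pow_succ_le_ascFactorial e

lemma exists_tsum_pow_le {r : ℝ≥0∞} (hr : r < 1) (e : ℕ) :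
    ∃ C : ℝ≥0, ∀ {X : Type u} (v : X → ℕ) (V : ℕ), (∀ x, V ≤ v x) →
      (∀ n, (v ⁻¹' {n}).encard ≤ ((n + 1) ^ e : ℕ)) →
      ∑' x, r ^ v x ≤ C * ((V + 1) ^ e * r ^ V) := by
  refine ⟨(∑' n : ℕ, ((n : ℝ≥0∞) + 1) ^ e * r ^ n).toNNReal, fun {X} v V hV hv => ?_⟩
  rw [ENNReal.coe_toNNReal (tsum_pow_mul_geometric_ne_top hr e), ← ENNReal.tsum_mul_right]
  have shift : ∀ x, r ^ v x = r ^ (V + (v x - V)) := fun x => by rw [Nat.add_sub_cancel' (hV x)]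
  rw [tsum_congr shift]
  refine (tsum_comp_le_of_encard_fiber_le (fun x => v x - V) (fun i => r ^ (V + i))
    (fun i => (V + i + 1) ^ e) fun i => ?_).trans (ENNReal.tsum_le_tsum fun i => ?_)
  · refine (Set.encard_le_encard fun x hx => ?_).trans (hv (V + i))
    have := hV x
    simp only [Set.mem_preimage, Set.mem_singleton_iff] at hx ⊢
    omega
  · have : ((V + i + 1 : ℕ) : ℝ≥0∞) ≤ (i + 1) * (V + 1) := by
      exact_mod_cast (by nlinarith [Nat.zero_le (V * i)] : V + i + 1 ≤ (i + 1) * (V + 1))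
    calc (((V + i + 1) ^ e : ℕ) : ℝ≥0∞) * r ^ (V + i)
        ≤ ((i + 1) * (V + 1)) ^ e * r ^ (V + i) := by push_cast at this ⊢; gcongr
      _ = (i + 1) ^ e * r ^ i * ((V + 1) ^ e * r ^ V) := by rw [pow_add, mul_pow]; ring

/-- The weight `b ^ (-μ₂(k))`, the order of magnitude of the Walsh coefficients at `k`. -/
noncomputable def wt (b k : ℕ) : ℝ≥0∞ := (b : ℝ≥0∞)⁻¹ ^ (lead b k + lead₂ b k)

variable {b : ℕ}

lemma inv_natCast_lt_one (hb : 1 < b) : (b : ℝ≥0∞)⁻¹ < 1 :=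
  ENNReal.inv_lt_one.2 (by exact_mod_cast hb)

lemma natCast_pow_mul_inv_pow (hb : 1 < b) (n : ℕ) : (b : ℝ≥0∞) ^ n * (b : ℝ≥0∞)⁻¹ ^ n = 1 := by
  rw [← mul_pow, ENNReal.mul_inv_cancel (by exact_mod_cast (by omega : b ≠ 0)) (by simp), one_pow]

lemma encard_shape_le (hb : 1 < b) (a : ℕ × ℕ) :
    {k | (lead b k, lead₂ b k) = a}.encard ≤ (b ^ (a.2 + 1) : ℕ) := by
  let ψ : ℕ → ℕ × ℕ := fun k => (k / b ^ (a.1 - 1), k % b ^ (a.1 - 1))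
  have maps : Set.MapsTo ψ {k | (lead b k, lead₂ b k) = a}
      ((Finset.range b ×ˢ Finset.range (b ^ a.2) : Finset (ℕ × ℕ)) : Set (ℕ × ℕ)) := by
    rintro k rfl
    simpa [ψ] using ⟨div_lead_lt hb k, lt_pow_lead hb (tail b k)⟩
  have inj : Set.InjOn ψ {k | (lead b k, lead₂ b k) = a} := fun k _ k' _ h => by
    rw [← Nat.div_add_mod' k (b ^ (a.1 - 1)), ← Nat.div_add_mod' k' (b ^ (a.1 - 1)),
      (Prod.mk.inj h).1, (Prod.mk.inj h).2]
  refine (Set.encard_le_encard_of_injOn maps inj).trans (le_of_eq ?_)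
  rw [Set.encard_coe_eq_coe_finsetCard, Finset.card_product, Finset.card_range, Finset.card_range,
    pow_succ']

lemma exists_tsum_wt_le (hb : 1 < b) :
    ∃ C : ℝ≥0, ∀ (V : ℕ) (S : Set ℕ), (∀ k ∈ S, V ≤ lead b k) →
      ∑' k : S, wt b k ≤ C * ((V + 1) * (b : ℝ≥0∞)⁻¹ ^ V) := by
  obtain ⟨C, hC⟩ := exists_tsum_pow_le (inv_natCast_lt_one hb) 1
  refine ⟨b * C, fun V S hS => ?_⟩
  let Y := {a : ℕ × ℕ // V ≤ a.1 ∧ a.2 ≤ a.1}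
  let φ : S → Y := fun k => ⟨(lead b k, lead₂ b k), hS k k.2, lead₂_le_lead hb k⟩
  have fiber : ∀ y : Y, (φ ⁻¹' {y}).encard ≤ (b ^ (y.1.2 + 1) : ℕ) := fun y =>
    (Set.encard_le_encard_of_injOn (fun _ hk => congrArg Subtype.val hk)
      Subtype.val_injective.injOn).trans (encard_shape_le hb y.1)
  have count : ∀ n, ((fun y : Y => y.1.1) ⁻¹' {n}).encard ≤ ((n + 1) ^ 1 : ℕ) := by
    intro n
    have maps : Set.MapsTo (fun y : Y => y.1.2) ((fun y : Y => y.1.1) ⁻¹' {n})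
        (Finset.range (n + 1) : Set ℕ) := by
      rintro y rfl
      simpa [Nat.lt_succ_iff] using y.2.2
    refine (Set.encard_le_encard_of_injOn maps fun y hy y' hy' h =>
      Subtype.ext (Prod.ext (hy.trans hy'.symm) h)).trans ?_
    rw [Set.encard_coe_eq_coe_finsetCard, Finset.card_range, pow_one]
  calc ∑' k : S, wt b k
      ≤ ∑' y : Y, ((b ^ (y.1.2 + 1) : ℕ) : ℝ≥0∞) * (b : ℝ≥0∞)⁻¹ ^ (y.1.1 + y.1.2) :=
        tsum_comp_le_of_encard_fiber_le φ (fun y => (b : ℝ≥0∞)⁻¹ ^ (y.1.1 + y.1.2)) _ fiber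
    _ = ∑' y : Y, (b : ℝ≥0∞) * (b : ℝ≥0∞)⁻¹ ^ y.1.1 := by
        refine tsum_congr fun y => ?_
        rw [← mul_one (_ * (b : ℝ≥0∞)⁻¹ ^ y.1.1), ← natCast_pow_mul_inv_pow hb y.1.2]
        push_cast
        ring
    _ ≤ b * (C * ((V + 1) ^ 1 * (b : ℝ≥0∞)⁻¹ ^ V)) := by
        rw [ENNReal.tsum_mul_left]
        gcongr
        exact hC _ V (fun y => y.2.1) count
    _ = (b * C : ℝ≥0) * ((V + 1) * (b : ℝ≥0∞)⁻¹ ^ V) := by push_cast; ring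

lemma exists_tsum_wt_outside_box_le (hb : 1 < b) (s : ℕ) :
    ∃ C : ℝ≥0, ∀ n : ℕ, ∑' k : {k : Fin s → ℕ // ¬ ∀ j, k j < b ^ n}, ∏ j, wt b (k.1 j)
      ≤ C * ((n + 1) * (b : ℝ≥0∞)⁻¹ ^ n) := by
  obtain ⟨C, hC⟩ := exists_tsum_wt_le hb
  refine ⟨s * C ^ s, fun n => ?_⟩
  let S : Fin s → Fin s → Set ℕ := fun j i => {k | i = j → n ≤ lead b k}
  let f : Fin s → (Fin s → ℕ) → ℝ≥0∞ := fun j k => ∏ i, (S j i).indicator (wt b) (k i)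
  have wt_le : ∀ k : {k : Fin s → ℕ // ¬ ∀ j, k j < b ^ n}, ∏ j, wt b (k.1 j) ≤ ∑ j, f j k.1 := by
    intro k
    obtain ⟨j, hj⟩ := not_forall.1 k.2
    have mem : ∀ i, k.1 i ∈ S j i := by
      rintro i rfl
      exact ((lt_lead_iff hb).2 (not_lt.1 hj)).le
    refine le_trans (le_of_eq ?_) (Finset.single_le_sum_of_canonicallyOrdered (Finset.mem_univ j))
    exact Finset.prod_congr rfl fun i _ => (Set.indicator_of_mem (mem i) _).symm
  have tsum_le : ∀ j, ∑' k, f j k ≤ (C : ℝ≥0∞) ^ s * ((n + 1) * (b : ℝ≥0∞)⁻¹ ^ n) := by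
    intro j
    calc ∑' k, f j k ≤ ∏ i, ∑' x : S j i, wt b x :=
          (tsum_pi_prod_le _).trans_eq (Finset.prod_congr rfl fun i _ => (tsum_subtype _ _).symm)
      _ ≤ ∏ i, ((C : ℝ≥0∞) * if i = j then (n + 1) * (b : ℝ≥0∞)⁻¹ ^ n else 1) := by
          gcongr with i
          split_ifs with hi
          · exact hC n _ fun k hk => hk hi
          · simpa using hC 0 (S j i) fun _ _ => Nat.zero_le _
      _ = (C : ℝ≥0∞) ^ s * ((n + 1) * (b : ℝ≥0∞)⁻¹ ^ n) := by
          rw [Finset.prod_mul_distrib, Finset.prod_ite_eq' Finset.univ j, Finset.prod_const]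
          simp
  calc _ ≤ ∑' k : {k : Fin s → ℕ // ¬ ∀ j, k j < b ^ n}, ∑ j, f j k.1 :=
        ENNReal.tsum_le_tsum wt_le
    _ ≤ ∑' k, ∑ j, f j k :=
        ENNReal.tsum_comp_le_tsum_of_injective Subtype.val_injective fun k => ∑ j, f j k
    _ = ∑ j, ∑' k, f j k := Summable.tsum_finsetSum fun _ _ => ENNReal.summable
    _ ≤ ∑ _j : Fin s, (C : ℝ≥0∞) ^ s * ((n + 1) * (b : ℝ≥0∞)⁻¹ ^ n) :=
        Finset.sum_le_sum fun j _ => tsum_le j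
    _ = (s * C ^ s : ℝ≥0) * ((n + 1) * (b : ℝ≥0∞)⁻¹ ^ n) := by simp [mul_assoc]

end Counting

section DualCounting

open scoped ENNReal NNReal

lemma exists_le_sum_eq {ι : Type*} [Fintype ι] (q : ι → ℕ) {M : ℕ} (hM : M ≤ ∑ j, q j) :
    ∃ f : ι → ℕ, (∀ j, f j ≤ q j) ∧ ∑ j, f j = M := by
  classical
  induction M with
  | zero => exact ⟨0, by simp, by simp⟩
  | succ M ih =>
    obtain ⟨f, hfq, hfM⟩ := ih (by omega)
    obtain ⟨j, -, hj⟩ : ∃ j ∈ Finset.univ, f j < q j :=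
      Finset.exists_lt_of_sum_lt (by omega)
    refine ⟨f + Pi.single j 1, fun i => ?_, by simp [Finset.sum_add_distrib, hfM]⟩
    by_cases hi : i = j
    · subst hi
      rw [Pi.add_apply, Pi.single_eq_same]
      omega
    · simp [hi, hfq i]

/-- As many low digits as possible are declared free, in blocks of `β`: at most `a j` of them in
coordinate `j` and at most `m` in total. The error term collects the rounding losses. -/
lemma exists_free_blocks {s β : ℕ} (hβ : 0 < β) (m : ℕ) (a : Fin s → ℕ) :
    ∃ f : Fin s → ℕ, (∀ j, β * f j ≤ a j) ∧ β * ∑ j, f j ≤ m ∧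
      ∑ j, a j ≤ β * ∑ j, f j + (∑ j, a j - m) + β * (s + 1) := by
  obtain ⟨f, hfa, hfm⟩ := exists_le_sum_eq (fun j => a j / β)
    (min_le_right (m / β) (∑ j, a j / β))
  have sum_le : ∑ j, a j ≤ β * ∑ j, a j / β + s * β := by
    have : ∀ j, a j ≤ β * (a j / β) + β := fun j => by
      have := Nat.div_add_mod (a j) β
      have := Nat.mod_lt (a j) hβ
      omega
    simpa [Finset.mul_sum, Finset.sum_add_distrib] using
      Finset.sum_le_sum fun j (_ : j ∈ Finset.univ) => this j
  have hdiv := Nat.div_add_mod m β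
  have hmod := Nat.mod_lt m hβ
  refine ⟨f, fun j => (Nat.mul_le_mul_left β (hfa j)).trans (Nat.mul_div_le _ _), ?_, ?_⟩
  · rw [hfm]
    exact (Nat.mul_le_mul_left β (min_le_left _ _)).trans (Nat.mul_div_le _ _)
  · rw [hfm, show β * (s + 1) = s * β + β by ring]
    rcases le_total (m / β) (∑ j, a j / β) with h | h
    · rw [min_eq_left h]; omega
    · rw [min_eq_right h]; omega

lemma div_pow_eq_mul_add {b : ℕ} (hb : 0 < b) {c d : ℕ} (h : c ≤ d) (x : ℕ) :
    x / b ^ c = b ^ (d - c) * (x / b ^ d) + x % b ^ d / b ^ c := by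
  have hd : b ^ d = b ^ c * b ^ (d - c) := by rw [← pow_add, Nat.add_sub_cancel' h]
  conv_lhs => rw [← Nat.div_add_mod x (b ^ d)]
  rw [congrArg (· * (x / b ^ d)) hd, mul_assoc, Nat.mul_add_div (by positivity)]

variable {b s β g w : ℕ} {βe : ℕ → ℕ → ZMod b}

/-- The free low digits are determined by the others, so only the remaining digits are counted. -/
lemma encard_csDual_shape_le (hb : b.Prime) (hβ : 0 < β) (hw : 0 < w)
    (hβe : DistinctNodes βe (β * s) g) (a : Fin s → ℕ × ℕ) :
    {l ∈ csDual b s β g w βe | ∀ j, (lead b (l j), lead₂ b (l j)) = a j}.encard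
      ≤ (b ^ (s + β * (s + 1) + (∑ j, (a j).2 - g * w)) : ℕ) := by
  obtain ⟨f, hfa, hfm, hfree⟩ := exists_free_blocks hβ (g * w) fun j => (a j).2
  let ψ : (Fin s → ℕ) → Fin s → ℕ × ℕ := fun l j =>
    (l j / b ^ ((a j).1 - 1), l j % b ^ ((a j).1 - 1) / b ^ (β * f j))
  let R : Finset (Fin s → ℕ × ℕ) := Fintype.piFinset fun j =>
    Finset.range b ×ˢ Finset.range (b ^ ((a j).2 - β * f j))
  have maps : Set.MapsTo ψ
      {l ∈ csDual b s β g w βe | ∀ j, (lead b (l j), lead₂ b (l j)) = a j} R := by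
    rintro l ⟨-, hla⟩
    simp only [R, Finset.mem_coe, Fintype.mem_piFinset, Finset.mem_product, Finset.mem_range, ψ]
    intro j
    have hfj := hfa j
    rw [← hla j] at hfj ⊢
    refine ⟨div_lead_lt hb.one_lt _, Nat.div_lt_of_lt_mul ?_⟩
    rw [← pow_add, Nat.add_sub_cancel' hfj]
    exact lt_pow_lead hb.one_lt _
  have inj : Set.InjOn ψ
      {l ∈ csDual b s β g w βe | ∀ j, (lead b (l j), lead₂ b (l j)) = a j} := by
    rintro l ⟨hl, hla⟩ l' ⟨hl', -⟩ h
    refine eq_of_mem_csDual_of_div_eq hb hβ hw hβe hfm hl hl' fun j => ?_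
    have hj : l j / b ^ ((a j).1 - 1) = l' j / b ^ ((a j).1 - 1) ∧
        l j % b ^ ((a j).1 - 1) / b ^ (β * f j) = l' j % b ^ ((a j).1 - 1) / b ^ (β * f j) :=
      Prod.mk.inj (congrFun h j)
    have hle : β * f j ≤ (a j).1 - 1 := by
      refine (hfa j).trans ?_
      rw [← hla j]
      exact lead₂_le hb.one_lt _
    rw [div_pow_eq_mul_add hb.pos hle (l j), div_pow_eq_mul_add hb.pos hle (l' j), hj.1, hj.2]
  refine (Set.encard_le_encard_of_injOn maps inj).trans ?_
  rw [Set.encard_coe_eq_coe_finsetCard]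
  norm_cast
  calc R.card = b ^ ∑ j, (1 + ((a j).2 - β * f j)) := by
        simp only [R, Fintype.card_piFinset, Finset.card_product, Finset.card_range,
          ← Finset.prod_pow_eq_pow_sum, pow_add, pow_one]
    _ ≤ b ^ (s + β * (s + 1) + (∑ j, (a j).2 - g * w)) := by
        refine Nat.pow_le_pow_right hb.pos ?_
        rw [Finset.sum_add_distrib, Finset.sum_tsub_distrib _ fun j _ => hfa j, ← Finset.mul_sum,
          Finset.sum_const, Finset.card_univ, Fintype.card_fin, smul_eq_mul, mul_one]
        omega

/-- The possible families of leading positions `(a₁, a₂)` of the coordinates of a vector whose Dick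
metric `μ₂` is at least `D`. -/
def shapes (s D : ℕ) : Set (Fin s → ℕ × ℕ) :=
  {a | (∀ j, (a j).2 ≤ (a j).1) ∧ D ≤ ∑ j, (a j).1 + ∑ j, (a j).2}

lemma exists_tsum_shapes_le {r : ℝ≥0∞} (hr : r < 1) (s : ℕ) :
    ∃ C : ℝ≥0, ∀ m D : ℕ, D ≤ 2 * m →
      ∑' a : shapes s D, r ^ (∑ j, (a.1 j).1 + min (∑ j, (a.1 j).2) m)
        ≤ C * ((D + 1) ^ (2 * s) * r ^ D) := by
  obtain ⟨C, hC⟩ := exists_tsum_pow_le hr (2 * s)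
  refine ⟨C, fun m D hD => hC _ D (fun ⟨a, ha, haD⟩ => ?_) fun n => ?_⟩
  · have := Finset.sum_le_sum fun j (_ : j ∈ Finset.univ) => ha j
    dsimp only
    omega
  · let R : Finset (Fin s → ℕ × ℕ) := Fintype.piFinset fun _ =>
      Finset.range (n + 1) ×ˢ Finset.range (n + 1)
    refine (Set.encard_le_encard_of_injOn (t := R) (f := Subtype.val) ?_
      Subtype.val_injective.injOn).trans ?_
    · rintro ⟨a, ha, -⟩ rfl
      simp only [R, Finset.mem_coe, Fintype.mem_piFinset, Finset.mem_product, Finset.mem_range]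
      intro j
      have hj : (a j).1 ≤ ∑ j, (a j).1 :=
        Finset.single_le_sum_of_canonicallyOrdered (f := fun j => (a j).1) (Finset.mem_univ j)
      have := ha j
      omega
    · rw [Set.encard_coe_eq_coe_finsetCard]
      simp [R, Fintype.card_piFinset, pow_mul, sq]

lemma tsum_wt_csDual_le_tsum_shapes (hb : b.Prime) (hβ : 2 ≤ β) (hw : 0 < w)
    (hβe : DistinctNodes βe (β * s) g) :
    ∑' l : {l : Fin s → ℕ // l ∈ csDual b s β g w βe ∧ l ≠ 0}, ∏ j, wt b (l.1 j)
      ≤ (b : ℝ≥0∞) ^ (s + β * (s + 1)) * ∑' a : shapes s (2 * (g * w) - 2 * (β * s)),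
          (b : ℝ≥0∞)⁻¹ ^ (∑ j, (a.1 j).1 + min (∑ j, (a.1 j).2) (g * w)) := by
  let φ : {l : Fin s → ℕ // l ∈ csDual b s β g w βe ∧ l ≠ 0} →
      shapes s (2 * (g * w) - 2 * (β * s)) := fun l =>
    ⟨fun j => (lead b (l.1 j), lead₂ b (l.1 j)), fun j => lead₂_le_lead hb.one_lt _, by
      have := two_mul_lt_sum_lead_add_lead₂ hb hβ hw hβe l.2.1 l.2.2
      rw [Finset.sum_add_distrib] at this
      dsimp only
      omega⟩
  have fiber : ∀ a, (φ ⁻¹' {a}).encard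
      ≤ (b ^ (s + β * (s + 1) + (∑ j, (a.1 j).2 - g * w)) : ℕ) := fun a =>
    (Set.encard_le_encard_of_injOn
      (t := {l ∈ csDual b s β g w βe | ∀ j, (lead b (l j), lead₂ b (l j)) = a.1 j})
      (fun l hl => ⟨l.2.1, fun j => congrFun (congrArg Subtype.val hl) j⟩)
      Subtype.val_injective.injOn).trans
      (encard_csDual_shape_le hb (by omega) hw hβe a.1)
  calc _ = ∑' l, (b : ℝ≥0∞)⁻¹ ^ (∑ j, ((φ l).1 j).1 + ∑ j, ((φ l).1 j).2) := by
        simp only [φ, wt, Finset.prod_pow_eq_pow_sum, Finset.sum_add_distrib]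
    _ ≤ _ := tsum_comp_le_of_encard_fiber_le φ
        (fun a => (b : ℝ≥0∞)⁻¹ ^ (∑ j, (a.1 j).1 + ∑ j, (a.1 j).2)) _ fiber
    _ = _ := by
        rw [← ENNReal.tsum_mul_left]
        refine tsum_congr fun a => ?_
        rw [show ∑ j, (a.1 j).1 + ∑ j, (a.1 j).2 = (∑ j, (a.1 j).1 + min (∑ j, (a.1 j).2) (g * w))
          + (∑ j, (a.1 j).2 - g * w) by omega, Nat.cast_pow, pow_add _ _ (_ - _),
          pow_add _ _ (_ - _), mul_mul_mul_comm, natCast_pow_mul_inv_pow hb.one_lt, mul_one]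

lemma exists_tsum_wt_csDual_le (hb : b.Prime) (s : ℕ) (hβ : 2 ≤ β) :
    ∃ C : ℝ≥0, ∀ {g w : ℕ} {βe : ℕ → ℕ → ZMod b}, 0 < g → 0 < w → DistinctNodes βe (β * s) g →
      ∑' l : {l : Fin s → ℕ // l ∈ csDual b s β g w βe ∧ l ≠ 0}, ∏ j, wt b (l.1 j)
        ≤ C * (((g * w : ℕ) : ℝ≥0∞) ^ (2 * s) * (b : ℝ≥0∞)⁻¹ ^ (2 * (g * w))) := by
  obtain ⟨C, hC⟩ := exists_tsum_shapes_le (inv_natCast_lt_one hb.one_lt) s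
  refine ⟨b ^ (s + β * (s + 1)) * (C * (3 ^ (2 * s) * b ^ (2 * (β * s)))),
    fun {g w βe} hg hw hβe => ?_⟩
  set m := g * w
  set D := 2 * m - 2 * (β * s)
  have hm0 : 0 < m := Nat.mul_pos hg hw
  have base_le : (D : ℝ≥0∞) + 1 ≤ 3 * m := by
    exact_mod_cast (by omega : D + 1 ≤ 3 * m)
  have pow_le : (b : ℝ≥0∞)⁻¹ ^ D ≤ b ^ (2 * (β * s)) * (b : ℝ≥0∞)⁻¹ ^ (2 * m) := by
    calc (b : ℝ≥0∞)⁻¹ ^ D = b ^ (2 * (β * s)) * (b : ℝ≥0∞)⁻¹ ^ (2 * (β * s) + D) := by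
          rw [pow_add, ← mul_assoc, natCast_pow_mul_inv_pow hb.one_lt, one_mul]
      _ ≤ b ^ (2 * (β * s)) * (b : ℝ≥0∞)⁻¹ ^ (2 * m) := by
          gcongr _ * ?_
          exact pow_le_pow_right_of_le_one' (inv_natCast_lt_one hb.one_lt).le (by omega)
  calc _ ≤ (b : ℝ≥0∞) ^ (s + β * (s + 1)) * (C * ((D + 1) ^ (2 * s) * (b : ℝ≥0∞)⁻¹ ^ D)) :=
        (tsum_wt_csDual_le_tsum_shapes hb hβ hw hβe).trans (by gcongr; exact hC m D (by omega))
    _ ≤ (b : ℝ≥0∞) ^ (s + β * (s + 1)) * (C * ((3 * m) ^ (2 * s) *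
          (b ^ (2 * (β * s)) * (b : ℝ≥0∞)⁻¹ ^ (2 * m)))) := by gcongr
    _ = _ := by push_cast; ring

end DualCounting

section Walsh

open Complex Filter Topology

variable {b : ℕ}

lemma measurable_walsh (b k : ℕ) : Measurable (walsh b k) := by
  have floor : ∀ a : ℕ, Measurable fun x : ℝ => ⌊x * (b : ℝ) ^ (a + 1)⌋ := fun a =>
    Int.measurable_floor.comp (measurable_id.mul_const _)
  exact measurable_exp.comp <| (Finset.measurable_sum _ fun a _ =>
    ((Measurable.of_discrete (f := fun z : ℤ => ((z % (b : ℤ) : ℤ) : ℂ))).comp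
      (floor a)).const_mul _).const_mul _

lemma norm_walsh (b k : ℕ) (x : ℝ) : ‖walsh b k x‖ = 1 := by
  rw [walsh, show 2 * (Real.pi : ℂ) * I / (b : ℂ) *
      ∑ a ∈ Finset.range (k + 1), (bdigit b k a : ℂ) * (rdigit b x (a + 1) : ℂ)
    = ((2 * Real.pi / b * ∑ a ∈ Finset.range (k + 1), (bdigit b k a : ℝ) * (rdigit b x (a + 1) : ℝ)
      : ℝ) : ℂ) * I by push_cast; ring, norm_exp_ofReal_mul_I]

lemma intervalIntegrable_walsh (b k : ℕ) (x y : ℝ) : IntervalIntegrable (walsh b k) volume x y :=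
  (intervalIntegrable_const (c := (1 : ℝ))).mono_fun (measurable_walsh b k).aestronglyMeasurable
    (.of_forall fun _ => by simp [norm_walsh])

lemma walsh_eq_exp_sum_range (hb : 1 < b) {n k : ℕ} (hk : k < b ^ n) (x : ℝ) :
    walsh b k x = exp (2 * Real.pi * I / b *
      ∑ a ∈ Finset.range n, (bdigit b k a : ℂ) * (rdigit b x (a + 1) : ℂ)) := by
  have extend : ∀ {m M : ℕ}, k < b ^ m → m ≤ M →
      ∑ a ∈ Finset.range m, (bdigit b k a : ℂ) * (rdigit b x (a + 1) : ℂ) =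
        ∑ a ∈ Finset.range M, (bdigit b k a : ℂ) * (rdigit b x (a + 1) : ℂ) :=
    fun hm hM => Finset.sum_subset (Finset.range_mono hM) fun a _ ha => by
      rw [bdigit_eq_zero_of_lt hb hm (by simpa using ha), Nat.cast_zero, zero_mul]
  have hk' : k < b ^ (k + 1) := (Nat.lt_pow_self hb).trans (Nat.pow_lt_pow_succ hb)
  rw [walsh, extend hk' (le_max_right n (k + 1)), extend hk (le_max_left n (k + 1))]

lemma walsh_mul_pow_add (hb : 1 < b) {L k : ℕ} (hk : k < b ^ L) (κ : ℕ) (x : ℝ) :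
    walsh b (κ * b ^ L + k) x = walsh b k x * walsh b κ (x * b ^ L) := by
  have hbL : 0 < b ^ L := by positivity
  have hκ : κ < b ^ κ := Nat.lt_pow_self hb
  have lt : κ * b ^ L + k < b ^ (L + κ) := by
    rw [pow_add]
    nlinarith
  have low : ∀ a < L, bdigit b (κ * b ^ L + k) a = bdigit b k a := fun a ha => by
    rw [← bdigit_mod_pow _ ha, Nat.mul_add_mod', Nat.mod_eq_of_lt hk]
  have high : ∀ a, bdigit b (κ * b ^ L + k) (L + a) = bdigit b κ a := fun a => by
    rw [bdigit, pow_add, ← Nat.div_div_eq_div_mul, mul_comm κ, Nat.mul_add_div hbL,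
      Nat.div_eq_of_lt hk, add_zero, bdigit]
  have shift : ∀ a, rdigit b x (L + a + 1) = rdigit b (x * b ^ L) (a + 1) := fun a => by
    rw [rdigit, rdigit, add_assoc, pow_add, mul_assoc]
  rw [walsh_eq_exp_sum_range hb lt, walsh_eq_exp_sum_range hb hk, walsh_eq_exp_sum_range hb hκ,
    ← exp_add, ← mul_add, Finset.sum_range_add,
    Finset.sum_congr rfl fun a ha => by rw [low a (Finset.mem_range.1 ha)]]
  simp only [high, shift]

lemma walsh_eq_of_floor_eq (hb : 1 < b) {L k : ℕ} (hk : k < b ^ L) {x y : ℝ}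
    (h : ⌊x * (b : ℝ) ^ L⌋ = ⌊y * (b : ℝ) ^ L⌋) : walsh b k x = walsh b k y := by
  have coarsen : ∀ (z : ℝ) {a : ℕ}, a < L →
      ⌊z * (b : ℝ) ^ (a + 1)⌋ = ⌊z * (b : ℝ) ^ L⌋ / (b ^ (L - (a + 1)) : ℕ) := fun z a ha => by
    have hL : (b : ℝ) ^ L = b ^ (a + 1) * b ^ (L - (a + 1)) := by
      rw [← pow_add, Nat.add_sub_cancel' ha]
    rw [← Int.floor_div_natCast, hL, Nat.cast_pow, ← mul_assoc,
      mul_div_cancel_right₀ _ (by positivity)]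
  rw [walsh_eq_exp_sum_range hb hk, walsh_eq_exp_sum_range hb hk]
  refine congrArg (fun z => exp (2 * Real.pi * I / b * z)) (Finset.sum_congr rfl fun a ha => ?_)
  rw [rdigit, rdigit, coarsen x (Finset.mem_range.1 ha), coarsen y (Finset.mem_range.1 ha), h]

lemma continuousWithinAt_walsh (hb : 1 < b) (k : ℕ) (x : ℝ) :
    ContinuousWithinAt (walsh b k) (Set.Ici x) x := by
  have scale : Tendsto (fun y => y * (b : ℝ) ^ k) (𝓝[≥] x) (𝓝[≥] (x * (b : ℝ) ^ k)) :=
    tendsto_nhdsWithin_iff.2 ⟨(continuous_mul_const _).continuousAt.continuousWithinAt,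
      eventually_mem_nhdsWithin.mono fun y hy => by
        have : x ≤ y := hy
        simp only [Set.mem_Ici]
        gcongr⟩
  refine tendsto_const_nhds.congr' ?_
  filter_upwards [tendsto_pure.1 ((tendsto_floor_right_pure_floor _).comp scale)] with y hy
  exact walsh_eq_of_floor_eq hb (Nat.lt_pow_self hb) hy.symm

lemma periodic_walsh (b k : ℕ) : Function.Periodic (walsh b k) 1 := by
  intro x
  have shift : ∀ a : ℕ, rdigit b (x + 1) (a + 1) = rdigit b x (a + 1) := fun a => by
    have : (x + 1) * (b : ℝ) ^ (a + 1) = x * b ^ (a + 1) + ((b * b ^ a : ℕ) : ℤ) := by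
      push_cast
      ring
    rw [rdigit, rdigit, this, Int.floor_add_intCast, Nat.cast_mul, Int.add_mul_emod_self_left]
  simp only [walsh, shift]

lemma walsh_eq_exp_floor (hb : 1 < b) {κ : ℕ} (hκ : κ < b) (x : ℝ) :
    walsh b κ x = exp (2 * Real.pi * I / b * (κ * ⌊x * b⌋)) := by
  have hb0 : (b : ℂ) ≠ 0 := by exact_mod_cast (by omega : b ≠ 0)
  rw [walsh_eq_exp_sum_range hb (n := 1) (by rwa [pow_one]), exp_eq_exp_iff_exists_int]
  refine ⟨-(κ * (⌊x * b⌋ / b)), ?_⟩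
  have digit : bdigit b κ 0 = κ := by rw [bdigit, pow_zero, Nat.div_one, Nat.mod_eq_of_lt hκ]
  have hdiv : ((⌊x * b⌋ % b : ℤ) : ℂ) = ⌊x * b⌋ - b * (⌊x * b⌋ / b : ℤ) := by
    rw [eq_sub_iff_add_eq]
    exact_mod_cast Int.emod_add_mul_ediv _ _
  rw [Finset.sum_range_one, digit, rdigit, zero_add, pow_one, hdiv]
  push_cast
  field_simp
  ring

/-- Translation by `1 / b` multiplies a one-digit Walsh function by a nontrivial root of unity. -/
lemma integral_walsh_eq_zero (hb : 1 < b) {κ : ℕ} (hκ0 : 0 < κ) (hκ : κ < b) :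
    ∫ x in (0 : ℝ)..1, walsh b κ x = 0 := by
  have hb0 : (b : ℝ) ≠ 0 := by exact_mod_cast (by omega : b ≠ 0)
  set ζ := exp (2 * Real.pi * I / b)
  have hζ : ζ ^ κ ≠ 1 :=
    (isPrimitiveRoot_exp b (by omega)).pow_ne_one_of_pos_of_lt hκ0.ne' hκ
  have shift : ∀ x : ℝ, walsh b κ (x + 1 / b) = ζ ^ κ * walsh b κ x := fun x => by
    rw [walsh_eq_exp_floor hb hκ, walsh_eq_exp_floor hb hκ, ← exp_nat_mul, ← exp_add, add_mul,
      one_div_mul_cancel hb0, Int.floor_add_one]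
    push_cast
    ring_nf
  have eq_mul : ∫ x in (0 : ℝ)..1, walsh b κ x = ζ ^ κ * ∫ x in (0 : ℝ)..1, walsh b κ x := by
    rw [← intervalIntegral.integral_const_mul, ← intervalIntegral.integral_congr fun x _ => shift x,
      intervalIntegral.integral_comp_add_right, zero_add, add_comm 1,
      (periodic_walsh b κ).intervalIntegral_add_eq _ 0, zero_add]
  by_contra h
  exact hζ ((mul_eq_right₀ h).1 eq_mul.symm)

lemma eqOn_cell {H v : ℝ → ℂ} (hH : ∀ y, H y = H ⌊y⌋) (i : ℕ) {t : ℝ}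
    (ht : t ∈ Set.Icc (0 : ℝ) 1) :
    Set.EqOn (fun y => H i * v y) (fun y => H y * v y) (Set.uIoo (i : ℝ) (i + t)) := by
  intro y hy
  rw [Set.uIoo_of_le (by linarith [ht.1])] at hy
  have floor_eq : ⌊y⌋ = i :=
    Int.floor_eq_iff.2 ⟨by exact_mod_cast hy.1.le, by push_cast; linarith [hy.2, ht.2]⟩
  simp only [hH y, floor_eq, Int.cast_natCast]

lemma integral_cell_mul_periodic {H v : ℝ → ℂ} (hH : ∀ y, H y = H ⌊y⌋)
    (hv : Function.Periodic v 1) (i : ℕ) {t : ℝ} (ht : t ∈ Set.Icc (0 : ℝ) 1) :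
    ∫ y in (i : ℝ)..i + t, H y * v y = H i * ∫ y in (0 : ℝ)..t, v y := by
  have translate : ∫ y in (i : ℝ)..i + t, v y = ∫ y in (0 : ℝ)..t, v y := calc
    _ = ∫ y in (0 : ℝ)..t, v (y + i) := by
      rw [intervalIntegral.integral_comp_add_right, zero_add, add_comm]
    _ = _ := intervalIntegral.integral_congr fun y _ => by simpa using hv.nat_mul i y
  rw [← intervalIntegral.integral_congr_uIoo (eqOn_cell hH i ht),
    intervalIntegral.integral_const_mul, translate]

lemma integral_mul_periodic {H v : ℝ → ℂ} (hH : ∀ y, H y = H ⌊y⌋) (hv : Function.Periodic v 1)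
    (hvi : ∀ x y, IntervalIntegrable v volume x y) (n : ℕ) {t : ℝ} (ht : t ∈ Set.Icc (0 : ℝ) 1) :
    ∫ y in (0 : ℝ)..n + t, H y * v y =
      (∑ i ∈ Finset.range n, H i) * (∫ y in (0 : ℝ)..1, v y) + H n * ∫ y in (0 : ℝ)..t, v y := by
  have one_mem : (1 : ℝ) ∈ Set.Icc (0 : ℝ) 1 := ⟨zero_le_one, le_rfl⟩
  have integrable : ∀ (i : ℕ) {t : ℝ}, t ∈ Set.Icc (0 : ℝ) 1 →
      IntervalIntegrable (fun y => H y * v y) volume i (i + t) := fun i t ht =>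
    ((hvi _ _).const_mul _).congr_uIoo (eqOn_cell hH i ht)
  have cells : ∀ i < n, IntervalIntegrable (fun y => H y * v y) volume (i : ℕ) ((i + 1 : ℕ) : ℝ) :=
    fun i _ => by simpa using integrable i one_mem
  have integral_cells := intervalIntegral.sum_integral_adjacent_intervals
    (a := fun i : ℕ => (i : ℝ)) cells
  have whole := IntervalIntegrable.trans_iterate (a := fun i : ℕ => (i : ℝ)) cells
  rw [Nat.cast_zero] at integral_cells whole
  rw [← intervalIntegral.integral_add_adjacent_intervals whole (integrable n ht),
    integral_cell_mul_periodic hH hv n ht, ← integral_cells, Finset.sum_mul]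
  congr 1
  exact Finset.sum_congr rfl fun i _ => by
    rw [← integral_cell_mul_periodic hH hv i one_mem, Nat.cast_succ]

/-- The antiderivative `J_k(x) = ∫₀ˣ wal_k` of a Walsh function. -/
noncomputable def walshInt (b k : ℕ) (x : ℝ) : ℂ := ∫ u in (0 : ℝ)..x, walsh b k u

lemma norm_walshInt_le (b k : ℕ) {x : ℝ} (hx : 0 ≤ x) : ‖walshInt b k x‖ ≤ x := by
  simpa [abs_of_nonneg hx, walshInt] using
    intervalIntegral.norm_integral_le_of_norm_le_const (a := 0) (b := x) (C := 1)
      fun u _ => (norm_walsh b k u).le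

lemma continuous_walshInt (b k : ℕ) : Continuous (walshInt b k) :=
  intervalIntegral.continuous_primitive (intervalIntegrable_walsh b k) 0

lemma periodic_walshInt (hb : 1 < b) {κ : ℕ} (hκ0 : 0 < κ) (hκ : κ < b) :
    Function.Periodic (walshInt b κ) 1 := fun x => by
  rw [walshInt, ← intervalIntegral.integral_add_adjacent_intervals
    (intervalIntegrable_walsh b κ 0 x) (intervalIntegrable_walsh b κ x (x + 1)),
    (periodic_walsh b κ).intervalIntegral_add_eq x 0, zero_add, integral_walsh_eq_zero hb hκ0 hκ,
    add_zero, walshInt]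

lemma walsh_div_pow_eq_floor (hb : 1 < b) {L k : ℕ} (hk : k < b ^ L) (y : ℝ) :
    walsh b k (y / (b : ℝ) ^ L) = walsh b k (⌊y⌋ / (b : ℝ) ^ L) := by
  have hbL : (b : ℝ) ^ L ≠ 0 := by positivity
  refine walsh_eq_of_floor_eq hb hk ?_
  rw [div_mul_cancel₀ _ hbL, div_mul_cancel₀ _ hbL, Int.floor_intCast]

lemma walshInt_natCast_div_pow (hb : 1 < b) {L k : ℕ} (hk : k < b ^ L) (n : ℕ) :
    walshInt b k (n / (b : ℝ) ^ L) =
      (∑ i ∈ Finset.range n, walsh b k (i / (b : ℝ) ^ L)) / (b : ℂ) ^ L := by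
  have hbL : (b : ℝ) ^ L ≠ 0 := by positivity
  have hbL' : (b : ℂ) ^ L ≠ 0 := by exact_mod_cast hbL
  have := integral_mul_periodic (walsh_div_pow_eq_floor hb hk) (v := fun _ => 1) (fun _ => rfl)
    (fun _ _ => intervalIntegrable_const) n (Set.left_mem_Icc.2 zero_le_one)
  simp only [add_zero, mul_one, intervalIntegral.integral_same, mul_zero,
    intervalIntegral.integral_const, sub_zero, one_smul] at this
  rw [← this, intervalIntegral.integral_comp_div _ hbL, zero_div, walshInt, real_smul, ofReal_pow,
    ofReal_natCast, mul_div_cancel_left₀ _ hbL']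

lemma integral_walsh_mul_periodic (hb : 1 < b) {L k : ℕ} (hk : k < b ^ L) {v : ℝ → ℂ}
    (hv : Function.Periodic v 1) (hvi : ∀ x y, IntervalIntegrable v volume x y) {x : ℝ}
    (hx : 0 ≤ x) :
    ∫ u in (0 : ℝ)..x, walsh b k u * v (u * (b : ℝ) ^ L) =
      walshInt b k (⌊x * (b : ℝ) ^ L⌋₊ / (b : ℝ) ^ L) * (∫ y in (0 : ℝ)..1, v y) +
        walsh b k x * (∫ y in (0 : ℝ)..Int.fract (x * (b : ℝ) ^ L), v y) / (b : ℂ) ^ L := by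
  have hbL : (b : ℝ) ^ L ≠ 0 := by positivity
  have hbL' : (b : ℂ) ^ L ≠ 0 := by exact_mod_cast hbL
  set y := x * (b : ℝ) ^ L
  have hy0 : 0 ≤ y := by positivity
  have cells := integral_mul_periodic (walsh_div_pow_eq_floor hb hk) hv hvi ⌊y⌋₊
    (t := Int.fract y) ⟨Int.fract_nonneg y, (Int.fract_lt_one y).le⟩
  have hyx : y / (b : ℝ) ^ L = x := mul_div_cancel_right₀ x hbL
  rw [natCast_floor_eq_intCast_floor hy0, Int.floor_add_fract, ← natCast_floor_eq_intCast_floor hy0]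
    at cells
  have subst := intervalIntegral.integral_comp_div (a := 0) (b := y)
    (fun u => walsh b k u * v (u * (b : ℝ) ^ L)) hbL
  simp only [div_mul_cancel₀ _ hbL, zero_div, hyx, real_smul, ofReal_pow, ofReal_natCast] at subst
  have floor : walsh b k (⌊y⌋₊ / (b : ℝ) ^ L) = walsh b k x := by
    rw [natCast_floor_eq_intCast_floor hy0, ← walsh_div_pow_eq_floor hb hk, hyx]
  rw [walshInt_natCast_div_pow hb hk, ← mul_right_inj' hbL', ← subst, cells, floor]
  field_simp

lemma walshInt_eq_mul_walshInt (hb : 1 < b) {k : ℕ} (hk : k ≠ 0) {x : ℝ} (hx : 0 ≤ x) :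
    walshInt b k x = walsh b (tail b k) x *
      walshInt b (k / b ^ (lead b k - 1)) (x * (b : ℝ) ^ (lead b k - 1)) /
        (b : ℂ) ^ (lead b k - 1) := by
  have hκ0 := div_lead_pos hb hk
  have hκ := div_lead_lt hb k
  have := integral_walsh_mul_periodic hb (tail_lt hb k) (periodic_walsh b _)
    (intervalIntegrable_walsh b (k / b ^ (lead b k - 1))) hx
  simp only [← walsh_mul_pow_add hb (tail_lt hb k), div_lead_mul_add_tail] at this
  have period := (periodic_walshInt hb hκ0 hκ).sub_int_mul_eq
    (x := x * (b : ℝ) ^ (lead b k - 1)) ⌊x * (b : ℝ) ^ (lead b k - 1)⌋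
  rw [mul_one] at period
  rw [walshInt, this, integral_walsh_eq_zero hb hκ0 hκ, mul_zero, zero_add, ← period]
  rfl

lemma walshInt_one (hb : 1 < b) {k : ℕ} (hk : k ≠ 0) : walshInt b k 1 = 0 := by
  have period := (periodic_walshInt hb (div_lead_pos hb hk) (div_lead_lt hb k)).nat_mul_eq
    (b ^ (lead b k - 1))
  rw [mul_one, Nat.cast_pow] at period
  rw [walshInt_eq_mul_walshInt hb hk zero_le_one, one_mul, period, walshInt,
    intervalIntegral.integral_same, mul_zero, zero_div]

lemma norm_walshInt_le_one (hb : 1 < b) {κ : ℕ} (hκ0 : 0 < κ) (hκ : κ < b) (y : ℝ) :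
    ‖walshInt b κ y‖ ≤ 1 := by
  have := (periodic_walshInt hb hκ0 hκ).sub_int_mul_eq (x := y) ⌊y⌋
  rw [mul_one] at this
  rw [← this]
  exact (norm_walshInt_le b κ (Int.fract_nonneg y)).trans (Int.fract_lt_one y).le

lemma norm_walshInt_le_inv_pow (hb : 1 < b) (k : ℕ) {x : ℝ} (hx : x ∈ Set.Icc (0 : ℝ) 1) :
    ‖walshInt b k x‖ ≤ ((b : ℝ) ^ (lead b k - 1))⁻¹ := by
  rcases eq_or_ne k 0 with rfl | hk
  · simpa [lead] using (norm_walshInt_le b 0 hx.1).trans hx.2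
  · rw [walshInt_eq_mul_walshInt hb hk hx.1, norm_div, norm_mul, norm_walsh, one_mul, norm_pow,
      norm_natCast, div_eq_mul_inv]
    exact mul_le_of_le_one_left (by positivity)
      (norm_walshInt_le_one hb (div_lead_pos hb hk) (div_lead_lt hb k) _)

/-- The quantity `b ^ (1 - a₁) * b ^ (1 - a₂)`, where a missing position contributes the factor `1`;
it bounds the Walsh coefficients at `k` of piecewise linear functions. -/
noncomputable def decay (b k : ℕ) : ℝ :=
  ((b : ℝ) ^ (lead b k - 1))⁻¹ * ((b : ℝ) ^ (lead₂ b k - 1))⁻¹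

lemma norm_integral_walshInt_le (hb : 1 < b) {k : ℕ} (hk : k ≠ 0) {x : ℝ}
    (hx : x ∈ Set.Icc (0 : ℝ) 1) : ‖∫ u in (0 : ℝ)..x, walshInt b k u‖ ≤ 2 * decay b k := by
  have hκ0 := div_lead_pos hb hk
  have hκ := div_lead_lt hb k
  have hlead₂ := lead₂_le hb k
  have split : ∀ u ∈ Set.uIcc 0 x, walshInt b k u = _ := fun u hu =>
    walshInt_eq_mul_walshInt hb hk (Set.uIcc_of_le hx.1 ▸ hu).1
  rw [decay, intervalIntegral.integral_congr split, intervalIntegral.integral_div,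
    integral_walsh_mul_periodic hb (tail_lt hb k) (periodic_walshInt hb hκ0 hκ)
      (fun _ _ => (continuous_walshInt b _).intervalIntegrable _ _) hx.1]
  set L := lead b k - 1
  set κ := k / b ^ L
  have floor_mem : ⌊x * (b : ℝ) ^ L⌋₊ / (b : ℝ) ^ L ∈ Set.Icc (0 : ℝ) 1 := by
    refine ⟨by positivity, div_le_one_of_le₀ ?_ (by positivity)⟩
    exact (Nat.floor_le (by have := hx.1; positivity)).trans
      (mul_le_of_le_one_left (by positivity) hx.2)
  have integral_le : ∀ {t : ℝ}, t ∈ Set.Icc (0 : ℝ) 1 →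
      ‖∫ y in (0 : ℝ)..t, walshInt b κ y‖ ≤ 1 := fun {t} ht => by
    simpa [abs_of_nonneg ht.1] using (intervalIntegral.norm_integral_le_of_norm_le_const
      fun y _ => norm_walshInt_le_one hb hκ0 hκ y).trans (by simpa [abs_of_nonneg ht.1] using ht.2)
  rw [norm_div, norm_pow, norm_natCast, div_eq_inv_mul, mul_left_comm]
  gcongr
  refine (norm_add_le _ _).trans ?_
  rw [norm_mul, norm_div, norm_mul, norm_walsh, one_mul, norm_pow, norm_natCast, two_mul]
  gcongr
  · exact mul_le_of_le_one_right (norm_nonneg _) (integral_le ⟨zero_le_one, le_rfl⟩) |>.trans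
      (norm_walshInt_le_inv_pow hb (tail b k) floor_mem)
  · refine div_le_of_le_mul₀ (by positivity) (by positivity) ((integral_le
      ⟨Int.fract_nonneg _, (Int.fract_lt_one _).le⟩).trans ?_)
    rw [one_le_inv_mul₀ (by positivity)]
    exact pow_le_pow_right₀ (by exact_mod_cast hb.le) (by omega)

lemma norm_integral_walsh_le (hb : 1 < b) (k : ℕ) :
    ‖∫ x in (0 : ℝ)..1, walsh b k x‖ ≤ decay b k := by
  rcases eq_or_ne k 0 with rfl | hk
  · simpa [walshInt, decay, lead₂, lead, tail] using norm_walshInt_le b 0 zero_le_one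
  · rw [← walshInt, walshInt_one hb hk, norm_zero, decay]
    positivity

lemma integral_hinge_mul_walsh (hb : 1 < b) (k : ℕ) {t : ℝ} (ht : t ∈ Set.Icc (0 : ℝ) 1) :
    ∫ x in (0 : ℝ)..1, ((max (x - t) 0 : ℝ) : ℂ) * walsh b k x =
      (1 - t) * walshInt b k 1 - ∫ u in t..1, walshInt b k u := by
  have integrable : ∀ x y : ℝ, IntervalIntegrable
      (fun u => ((max (u - t) 0 : ℝ) : ℂ) * walsh b k u) volume x y := fun x y =>
    (intervalIntegrable_walsh b k x y).continuousOn_mul (by fun_prop)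
  have below : ∫ x in (0 : ℝ)..t, ((max (x - t) 0 : ℝ) : ℂ) * walsh b k x = 0 :=
    intervalIntegral.integral_zero_ae <| .of_forall fun x hx => by
      rw [Set.uIoc_of_le ht.1] at hx
      rw [max_eq_right (by linarith [hx.2]), ofReal_zero, zero_mul]
  have above : ∫ x in t..1, ((max (x - t) 0 : ℝ) : ℂ) * walsh b k x =
      ∫ x in t..1, ((x : ℂ) - t) * walsh b k x :=
    intervalIntegral.integral_congr fun x hx => by
      rw [Set.uIcc_of_le ht.2] at hx
      simp only [max_eq_left (sub_nonneg.2 hx.1), ofReal_sub]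
  have parts := intervalIntegral.integral_mul_deriv_eq_deriv_mul_of_hasDeriv_right
    (a := t) (b := 1) (u := fun x : ℝ => (x : ℂ) - t) (u' := fun _ => 1) (v := walshInt b k)
    (v' := walsh b k) (by fun_prop) (continuous_walshInt b k).continuousOn
    (fun x _ => (((hasDerivAt_id x).ofReal_comp.sub_const _).hasDerivWithinAt))
    (fun x _ => intervalIntegral.integral_hasDerivWithinAt_right (s := Set.Ici x)
      (t := Set.Ioi x) (intervalIntegrable_walsh b k 0 x)
      (measurable_walsh b k).stronglyMeasurable.stronglyMeasurableAtFilter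
      ((continuousWithinAt_walsh hb k x).mono Set.Ioi_subset_Ici_self) |>.mono
        Set.Ioi_subset_Ici_self)
    intervalIntegrable_const (intervalIntegrable_walsh b k t 1)
  rw [← intervalIntegral.integral_add_adjacent_intervals (integrable 0 t) (integrable t 1), below,
    above, parts]
  simp

lemma norm_integral_hinge_mul_walsh_le (hb : 1 < b) (k : ℕ) {t : ℝ} (ht : t ∈ Set.Icc (0 : ℝ) 1) :
    ‖∫ x in (0 : ℝ)..1, ((max (x - t) 0 : ℝ) : ℂ) * walsh b k x‖ ≤ 4 * decay b k := by
  rcases eq_or_ne k 0 with rfl | hk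
  · have bound : ∀ x ∈ Set.uIoc (0 : ℝ) 1, ‖((max (x - t) 0 : ℝ) : ℂ) * walsh b 0 x‖ ≤ 1 :=
      fun x hx => by
        rw [Set.uIoc_of_le zero_le_one] at hx
        rw [norm_mul, norm_walsh, mul_one, norm_real, Real.norm_of_nonneg (le_max_right _ _)]
        exact max_le (by linarith [hx.2, ht.1]) zero_le_one
    refine (intervalIntegral.norm_integral_le_of_norm_le_const bound).trans ?_
    simp [decay, lead₂, lead, tail]
  · have sub := intervalIntegral.integral_interval_sub_left (a := 0) (b := 1) (c := t)
      ((continuous_walshInt b k).intervalIntegrable _ _)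
      ((continuous_walshInt b k).intervalIntegrable _ _) (μ := volume)
    rw [integral_hinge_mul_walsh hb k ht, walshInt_one hb hk, mul_zero, zero_sub, norm_neg, ← sub]
    linarith [norm_sub_le (∫ u in (0 : ℝ)..1, walshInt b k u) (∫ u in (0 : ℝ)..t, walshInt b k u),
      norm_integral_walshInt_le hb hk (Set.right_mem_Icc.2 zero_le_one),
      norm_integral_walshInt_le hb hk ht]

lemma norm_integral_hinge_add_affine_mul_walsh_le (hb : 1 < b) (k : ℕ) {t : ℝ}
    (ht : t ∈ Set.Icc (0 : ℝ) 1) (p q r : ℝ) :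
    ‖∫ x in (0 : ℝ)..1, ((p * max (x - t) 0 + q * x + r : ℝ) : ℂ) * walsh b k x‖ ≤
      (4 * |p| + 4 * |q| + |r|) * decay b k := by
  have integrable : ∀ u : ℝ, IntervalIntegrable
      (fun x => ((max (x - u) 0 : ℝ) : ℂ) * walsh b k x) volume 0 1 := fun u =>
    (intervalIntegrable_walsh b k 0 1).continuousOn_mul (by fun_prop)
  have expand : ∀ x ∈ Set.uIcc (0 : ℝ) 1,
      ((p * max (x - t) 0 + q * x + r : ℝ) : ℂ) * walsh b k x =
        p * (((max (x - t) 0 : ℝ) : ℂ) * walsh b k x) +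
          q * (((max (x - 0) 0 : ℝ) : ℂ) * walsh b k x) + r * walsh b k x := fun x hx => by
    rw [Set.uIcc_of_le zero_le_one] at hx
    rw [sub_zero, max_eq_left hx.1]
    push_cast
    ring
  have hp := norm_integral_hinge_mul_walsh_le hb k ht
  have hq := norm_integral_hinge_mul_walsh_le hb k (Set.left_mem_Icc.2 zero_le_one)
  rw [intervalIntegral.integral_congr expand, intervalIntegral.integral_add
      (((integrable t).const_mul _).add ((integrable 0).const_mul _))
      ((intervalIntegrable_walsh b k 0 1).const_mul _),
    intervalIntegral.integral_add ((integrable t).const_mul _) ((integrable 0).const_mul _)]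
  simp only [intervalIntegral.integral_const_mul]
  refine norm_add₃_le.trans ?_
  simp only [norm_mul, norm_real, Real.norm_eq_abs]
  linarith [mul_le_mul_of_nonneg_left hp (abs_nonneg p),
    mul_le_mul_of_nonneg_left hq (abs_nonneg q),
    mul_le_mul_of_nonneg_left (norm_integral_walsh_le hb k) (abs_nonneg r)]

end Walsh

section Kernel

open Complex

lemma bernoulliPoly_eq_sum (r : ℕ) (x : ℝ) : bernoulliPoly r x =
    ∑ i ∈ Finset.range (r + 1), (bernoulli i : ℝ) * r.choose i * x ^ (r - i) := by
  simp [bernoulliPoly, Polynomial.bernoulli, Polynomial.aeval_monomial]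

lemma bernoulliPoly_zero (x : ℝ) : bernoulliPoly 0 x = 1 := by
  simp [bernoulliPoly]

lemma bernoulliPoly_one (x : ℝ) : bernoulliPoly 1 x = x - 1 / 2 := by
  simp only [bernoulliPoly_eq_sum, Finset.sum_range_succ, Finset.sum_range_zero, bernoulli_zero,
    bernoulli_one, Nat.choose]
  push_cast
  ring

lemma bernoulliPoly_two (x : ℝ) : bernoulliPoly 2 x = x ^ 2 - x + 1 / 6 := by
  simp only [bernoulliPoly_eq_sum, Finset.sum_range_succ, Finset.sum_range_zero, bernoulli_zero,
    bernoulli_one, bernoulli_two, Nat.choose]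
  push_cast
  ring

lemma bernoulliPoly_four (x : ℝ) : bernoulliPoly 4 x = x ^ 4 - 2 * x ^ 3 + x ^ 2 - 1 / 30 := by
  have bernoulli_three : bernoulli 3 = 0 := by
    rw [bernoulli_eq_bernoulli'_of_ne_one (by norm_num), bernoulli'_three]
  have bernoulli_four : bernoulli 4 = -1 / 30 := by
    rw [bernoulli_eq_bernoulli'_of_ne_one (by norm_num), bernoulli'_four]
  simp only [bernoulliPoly_eq_sum, Finset.sum_range_succ, Finset.sum_range_zero, bernoulli_zero,
    bernoulli_one, bernoulli_two, bernoulli_three, bernoulli_four, Nat.choose]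
  push_cast
  ring

/-- The Peano kernel `ψ_t` of the representation
`f x = ∫ f + (x - 1/2) * ∫ f' + ∫ ψ_t(x) * f''(t) dt` on the unit interval. -/
noncomputable def peano (t x : ℝ) : ℝ := max (x - t) 0 + (t - 1) * x + t * (1 - t) / 2

lemma peano_of_le {t x : ℝ} (h : t ≤ x) : peano t x = t * (x - (1 + t) / 2) := by
  rw [peano, max_eq_left (by linarith)]
  ring

lemma peano_of_ge {t x : ℝ} (h : x ≤ t) : peano t x = (1 - t) * (t / 2 - x) := by
  rw [peano, max_eq_right (by linarith)]
  ring

lemma continuous_peano : Continuous fun z : ℝ × ℝ => peano z.1 z.2 := by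
  unfold peano
  fun_prop

lemma integral_quartic (a c c₀ c₁ c₂ c₃ c₄ : ℝ) :
    ∫ t in a..c, (c₀ + c₁ * t + c₂ * t ^ 2 + c₃ * t ^ 3 + c₄ * t ^ 4) =
      c₀ * (c - a) + c₁ * (c ^ 2 - a ^ 2) / 2 + c₂ * (c ^ 3 - a ^ 3) / 3 +
        c₃ * (c ^ 4 - a ^ 4) / 4 + c₄ * (c ^ 5 - a ^ 5) / 5 := by
  rw [intervalIntegral.integral_add, intervalIntegral.integral_add, intervalIntegral.integral_add,
    intervalIntegral.integral_add]
  · have linear : ∫ t in a..c, c₁ * t = c₁ * ((c ^ 2 - a ^ 2) / 2) := by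
      rw [intervalIntegral.integral_const_mul, integral_id]
    simp only [linear, intervalIntegral.integral_const_mul, intervalIntegral.integral_const,
      integral_pow, smul_eq_mul]
    push_cast
    ring
  all_goals exact Continuous.intervalIntegrable (by fun_prop) _ _

lemma integral_peano_mul_peano_of_le {x y : ℝ} (hx : 0 ≤ x) (hxy : x ≤ y) (hy : y ≤ 1) :
    ∫ t in (0 : ℝ)..1, peano t x * peano t y =
      bernoulliPoly 2 x * bernoulliPoly 2 y / 4 - bernoulliPoly 4 (y - x) / 24 := by
  have integrable : ∀ a c : ℝ,
      IntervalIntegrable (fun t => peano t x * peano t y) volume a c := fun a c =>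
    ((continuous_peano.comp (Continuous.prodMk_left x)).mul
      (continuous_peano.comp (Continuous.prodMk_left y))).intervalIntegrable a c
  have left : ∫ t in (0 : ℝ)..x, peano t x * peano t y =
      ∫ t in (0 : ℝ)..x, (0 + 0 * t + (x - 1 / 2) * (y - 1 / 2) * t ^ 2 +
        (1 - x - y) / 2 * t ^ 3 + 1 / 4 * t ^ 4) :=
    intervalIntegral.integral_congr fun t ht => by
      rw [Set.uIcc_of_le hx] at ht
      simp only [peano_of_le ht.2, peano_of_le (ht.2.trans hxy)]
      ring
  have middle : ∫ t in x..y, peano t x * peano t y =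
      ∫ t in x..y, (0 + -x * (y - 1 / 2) * t + ((y - 1 / 2) / 2 + x / 2 + x * (y - 1 / 2)) * t ^ 2 +
        (-1 / 4 - (y - 1 / 2) / 2 - x / 2) * t ^ 3 + 1 / 4 * t ^ 4) :=
    intervalIntegral.integral_congr fun t ht => by
      rw [Set.uIcc_of_le hxy] at ht
      simp only [peano_of_ge ht.1, peano_of_le ht.2]
      ring
  have right : ∫ t in y..1, peano t x * peano t y =
      ∫ t in y..1, (x * y + (-(x + y) / 2 - 2 * x * y) * t + (1 / 4 + (x + y) + x * y) * t ^ 2 +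
        (-1 / 2 - (x + y) / 2) * t ^ 3 + 1 / 4 * t ^ 4) :=
    intervalIntegral.integral_congr fun t ht => by
      rw [Set.uIcc_of_le hy] at ht
      simp only [peano_of_ge ht.1, peano_of_ge (hxy.trans ht.1)]
      ring
  rw [← intervalIntegral.integral_add_adjacent_intervals (integrable 0 x) (integrable x 1),
    ← intervalIntegral.integral_add_adjacent_intervals (integrable x y) (integrable y 1), left,
    middle, right, integral_quartic, integral_quartic, integral_quartic, bernoulliPoly_two,
    bernoulliPoly_two, bernoulliPoly_four]
  ring

lemma integral_peano_mul_peano {x y : ℝ} (hx : x ∈ Set.Icc (0 : ℝ) 1)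
    (hy : y ∈ Set.Icc (0 : ℝ) 1) : ∫ t in (0 : ℝ)..1, peano t x * peano t y =
      bernoulliPoly 2 x * bernoulliPoly 2 y / 4 - bernoulliPoly 4 |x - y| / 24 := by
  rcases le_total x y with h | h
  · rw [integral_peano_mul_peano_of_le hx.1 h hy.2, abs_sub_comm, abs_of_nonneg (sub_nonneg.2 h)]
  · simp only [mul_comm (peano _ x)]
    rw [integral_peano_mul_peano_of_le hy.1 h hx.2, abs_of_nonneg (sub_nonneg.2 h),
      mul_comm (bernoulliPoly 2 y)]

/-- A feature map of the kernel `K₂`, that is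
`K₂(x, y) = ∑ i, ∫ t in 0..1, feature i t x * feature i t y`. -/
noncomputable def feature : Fin 3 → ℝ → ℝ → ℝ :=
  ![fun _ _ => 1, fun _ x => x - 1 / 2, peano]

lemma continuous_feature (i : Fin 3) : Continuous fun z : ℝ × ℝ => feature i z.1 z.2 := by
  fin_cases i
  · exact continuous_const
  · exact continuous_snd.sub continuous_const
  · exact continuous_peano

lemma Kker_two_eq_sum_integral_feature {x y : ℝ} (hx : x ∈ Set.Ico (0 : ℝ) 1)
    (hy : y ∈ Set.Ico (0 : ℝ) 1) :
    Kker 2 x y = ∑ i, ∫ t in Set.Ico (0 : ℝ) 1, feature i t x * feature i t y := by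
  simp only [integral_Ico_eq_integral_Ioc, ← intervalIntegral.integral_of_le zero_le_one,
    Fin.sum_univ_three, feature, Matrix.cons_val]
  rw [integral_peano_mul_peano (Set.Ico_subset_Icc_self hx) (Set.Ico_subset_Icc_self hy)]
  simp only [Kker, Finset.sum_range_succ, Finset.sum_range_zero, bernoulliPoly_zero,
    bernoulliPoly_one, Nat.factorial, intervalIntegral.integral_const, smul_eq_mul]
  push_cast
  ring

lemma norm_integral_feature_mul_walsh_le {b : ℕ} (hb : 1 < b) (k : ℕ) (i : Fin 3) {t : ℝ}
    (ht : t ∈ Set.Ico (0 : ℝ) 1) :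
    ‖∫ x in Set.Ico (0 : ℝ) 1, (feature i t x : ℂ) * walsh b k x‖ ≤ 9 * decay b k := by
  have hdecay : 0 ≤ decay b k := by unfold decay; positivity
  have bound := norm_integral_hinge_add_affine_mul_walsh_le hb k (Set.Ico_subset_Icc_self ht)
  rw [integral_Ico_eq_integral_Ioc, ← intervalIntegral.integral_of_le zero_le_one]
  fin_cases i
  · refine le_trans ?_ ((bound 0 0 1).trans ?_)
    · simp [feature]
    · gcongr
      norm_num
  · refine le_trans ?_ ((bound 0 1 (-1 / 2)).trans ?_)
    · refine (congrArg norm (intervalIntegral.integral_congr fun x _ => ?_)).le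
      change ((x - 1 / 2 : ℝ) : ℂ) * walsh b k x = _
      push_cast
      ring
    · gcongr
      norm_num [abs_of_nonneg]
  · refine le_trans ?_ ((bound 1 (t - 1) (t * (1 - t) / 2)).trans ?_)
    · simp [feature, peano]
    · have := ht.1
      have := ht.2
      gcongr
      rw [abs_one, abs_of_nonpos (by linarith), abs_of_nonneg (by nlinarith)]
      nlinarith

lemma norm_integral_prod_integral_mul_le {X Y T : Type*} [MeasurableSpace X] [MeasurableSpace Y]
    [MeasurableSpace T] {μ : Measure X} {μ' : Measure Y} {ν : Measure T} [SFinite μ] [SFinite μ']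
    [IsFiniteMeasure ν] {F : T → X → ℂ} {G : T → Y → ℂ}
    (integrable : Integrable (fun z : (X × Y) × T => F z.2 z.1.1 * G z.2 z.1.2)
      ((μ.prod μ').prod ν)) {a c : ℝ} (ha : ∀ᵐ t ∂ν, ‖∫ x, F t x ∂μ‖ ≤ a)
    (hc : ∀ᵐ t ∂ν, ‖∫ y, G t y ∂μ'‖ ≤ c) :
    ‖∫ z : X × Y, ∫ t, F t z.1 * G t z.2 ∂ν ∂(μ.prod μ')‖ ≤ a * c * ν.real Set.univ := by
  rw [integral_integral_swap integrable]
  simp only [integral_prod_mul]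
  refine norm_integral_le_of_norm_le_const ?_
  filter_upwards [ha, hc] with t hat hct
  rw [norm_mul]
  exact mul_le_mul hat hct (norm_nonneg _) ((norm_nonneg _).trans hat)

lemma integrable_feature_mul_walsh (b k l : ℕ) (i : Fin 3) :
    Integrable (fun z : (ℝ × ℝ) × ℝ =>
      ((feature i z.2 z.1.1 : ℂ) * (starRingEnd ℂ) (walsh b k z.1.1)) *
        ((feature i z.2 z.1.2 : ℂ) * walsh b l z.1.2))
      (((volume.restrict (Set.Ico (0 : ℝ) 1)).prod (volume.restrict (Set.Ico (0 : ℝ) 1))).prod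
        (volume.restrict (Set.Ico (0 : ℝ) 1))) := by
  rw [Measure.prod_restrict, Measure.prod_restrict]
  have continuous : Continuous fun z : (ℝ × ℝ) × ℝ => feature i z.2 z.1.1 * feature i z.2 z.1.2 :=
    ((continuous_feature i).comp (by fun_prop : Continuous fun z : (ℝ × ℝ) × ℝ => (z.2, z.1.1))).mul
      ((continuous_feature i).comp (by fun_prop : Continuous fun z : (ℝ × ℝ) × ℝ => (z.2, z.1.2)))
  have integrable : IntegrableOn (fun z : (ℝ × ℝ) × ℝ =>
      ((feature i z.2 z.1.1 * feature i z.2 z.1.2 : ℝ) : ℂ))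
      ((Set.Ico (0 : ℝ) 1 ×ˢ Set.Ico (0 : ℝ) 1) ×ˢ Set.Ico (0 : ℝ) 1)
      ((volume.prod volume).prod volume) :=
    ((continuous_ofReal.comp continuous).continuousOn.integrableOn_compact
      ((isCompact_Icc.prod isCompact_Icc).prod isCompact_Icc)).mono_set
        (Set.prod_mono (Set.prod_mono Set.Ico_subset_Icc_self Set.Ico_subset_Icc_self)
          Set.Ico_subset_Icc_self)
  have measurable : Measurable fun z : (ℝ × ℝ) × ℝ =>
      (starRingEnd ℂ) (walsh b k z.1.1) * walsh b l z.1.2 :=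
    ((continuous_conj.measurable.comp (measurable_walsh b k)).comp
      (measurable_fst.comp measurable_fst)).mul
        ((measurable_walsh b l).comp (measurable_snd.comp measurable_fst))
  refine (integrable.mul_bdd (c := 1) measurable.aestronglyMeasurable (.of_forall fun z => by
    rw [norm_mul, RCLike.norm_conj, norm_walsh, norm_walsh, mul_one])).congr
      (.of_forall fun z => ?_)
  push_cast
  ring

lemma norm_Khat_two_le {b : ℕ} (hb : 1 < b) (k l : ℕ) :
    ‖Khat b 2 k l‖ ≤ 243 * (decay b k * decay b l) := by
  have integrable := integrable_feature_mul_walsh b k l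
  have Khat_eq : Khat b 2 k l = ∫ z : ℝ × ℝ, ∑ i, (∫ t in Set.Ico (0 : ℝ) 1,
      ((feature i t z.1 : ℂ) * (starRingEnd ℂ) (walsh b k z.1)) *
        ((feature i t z.2 : ℂ) * walsh b l z.2))
      ∂((volume.restrict (Set.Ico (0 : ℝ) 1)).prod (volume.restrict (Set.Ico (0 : ℝ) 1))) := by
    rw [integral_prod _ (integrable_finsetSum _ fun i _ => (integrable i).integral_prod_left)]
    refine setIntegral_congr_fun measurableSet_Ico fun x hx =>
      setIntegral_congr_fun measurableSet_Ico fun y hy => ?_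
    simp only [Kker_two_eq_sum_integral_feature hx hy, ofReal_sum, Finset.sum_mul, mul_assoc]
    refine Finset.sum_congr rfl fun i _ => ?_
    rw [← integral_complex_ofReal, ← integral_mul_const]
    refine integral_congr_ae (.of_forall fun t => ?_)
    push_cast
    ring
  have conj_coeff : ∀ i, ∀ t ∈ Set.Ico (0 : ℝ) 1,
      ‖∫ x in Set.Ico (0 : ℝ) 1, (feature i t x : ℂ) * (starRingEnd ℂ) (walsh b k x)‖ ≤
        9 * decay b k := fun i t ht => by
    rw [← RCLike.norm_conj, ← integral_conj]
    simpa only [map_mul, conj_ofReal, conj_conj] using norm_integral_feature_mul_walsh_le hb k i ht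
  have term_le := fun i => norm_integral_prod_integral_mul_le (integrable i)
    (ae_restrict_of_forall_mem measurableSet_Ico (conj_coeff i))
    (ae_restrict_of_forall_mem measurableSet_Ico fun t ht =>
      norm_integral_feature_mul_walsh_le hb l i ht)
  rw [Khat_eq, integral_finsetSum _ fun i _ => (integrable i).integral_prod_left]
  refine (norm_sum_le_of_le _ fun i _ => term_le i).trans_eq ?_
  simp only [measureReal_restrict_apply_univ, Real.volume_real_Ico_of_le zero_le_one,
    Finset.sum_const, Finset.card_univ, Fintype.card_fin, nsmul_eq_mul]
  push_cast
  ring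

lemma KhatS_eq_prod (b α s : ℕ) (k l : Fin s → ℕ) :
    KhatS b α s k l = ∏ j, Khat b α (k j) (l j) := by
  have restrict_box : (volume : Measure (Fin s → ℝ)).restrict
      (Set.univ.pi fun _ => Set.Ico (0 : ℝ) 1) =
        Measure.pi fun _ => (volume : Measure ℝ).restrict (Set.Ico (0 : ℝ) 1) := by
    rw [volume_pi, Measure.restrict_pi_pi]
  unfold KhatS Khat walshVec
  rw [restrict_box, ← integral_fintype_prod_eq_prod (fun j x => ∫ y in Set.Ico (0 : ℝ) 1,
    (Kker α x y : ℂ) * (starRingEnd ℂ) (walsh b (k j) x) * walsh b (l j) y)]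
  refine integral_congr_ae (.of_forall fun x => ?_)
  dsimp only
  rw [← integral_fintype_prod_eq_prod (fun j y =>
    (Kker α (x j) y : ℂ) * (starRingEnd ℂ) (walsh b (k j) (x j)) * walsh b (l j) y)]
  refine integral_congr_ae (.of_forall fun y => ?_)
  dsimp only
  rw [Finset.prod_mul_distrib, Finset.prod_mul_distrib, ofReal_prod, map_prod]

end Kernel

section Assembly

open scoped ENNReal NNReal

variable {b : ℕ}

lemma inv_pow_pred_le (hb : 0 < b) (n : ℕ) : ((b : ℝ) ^ (n - 1))⁻¹ ≤ b * (b : ℝ)⁻¹ ^ n := by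
  rcases n with _ | n
  · simpa using Nat.succ_le_of_lt hb
  · rw [Nat.add_sub_cancel, pow_succ', mul_inv_cancel_left₀ (by positivity), inv_pow]

lemma ofReal_decay_le (hb : 0 < b) (k : ℕ) :
    ENNReal.ofReal (decay b k) ≤ (b : ℝ≥0∞) ^ 2 * wt b k := by
  have hb' : (0 : ℝ) < b := by positivity
  have wt_eq : (b : ℝ≥0∞) ^ 2 * wt b k =
      ENNReal.ofReal (b ^ 2 * (b : ℝ)⁻¹ ^ (lead b k + lead₂ b k)) := by
    rw [wt, ENNReal.ofReal_mul (by positivity), ENNReal.ofReal_pow hb'.le,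
      ENNReal.ofReal_pow (by positivity), ENNReal.ofReal_inv_of_pos hb', ENNReal.ofReal_natCast]
  rw [wt_eq, pow_add, sq, mul_mul_mul_comm]
  exact ENNReal.ofReal_le_ofReal
    (mul_le_mul (inv_pow_pred_le hb _) (inv_pow_pred_le hb _) (by positivity) (by positivity))

lemma enorm_Khat_two_le (hb : 1 < b) (k l : ℕ) :
    ‖Khat b 2 k l‖ₑ ≤ (243 * b ^ 4 : ℝ≥0) * (wt b k * wt b l) := calc
  ‖Khat b 2 k l‖ₑ ≤ ENNReal.ofReal (243 * (decay b k * decay b l)) := by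
    rw [← ofReal_norm]
    exact ENNReal.ofReal_le_ofReal (norm_Khat_two_le hb k l)
  _ = 243 * (ENNReal.ofReal (decay b k) * ENNReal.ofReal (decay b l)) := by
    rw [ENNReal.ofReal_mul (by norm_num), ENNReal.ofReal_mul (by unfold decay; positivity),
      ENNReal.ofReal_ofNat]
  _ ≤ 243 * ((b : ℝ≥0∞) ^ 2 * wt b k * ((b : ℝ≥0∞) ^ 2 * wt b l)) := by
    gcongr <;> exact ofReal_decay_le (by omega) _
  _ = (243 * b ^ 4 : ℝ≥0) * (wt b k * wt b l) := by
    push_cast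
    ring

lemma enorm_KhatS_two_le (hb : 1 < b) {s : ℕ} (k l : Fin s → ℕ) :
    ‖KhatS b 2 s k l‖ₑ ≤
      ((243 * b ^ 4) ^ s : ℝ≥0) * ((∏ j, wt b (k j)) * ∏ j, wt b (l j)) := by
  rw [KhatS_eq_prod, ← Finset.prod_mul_distrib, ENNReal.coe_pow, enorm_eq_nnnorm,
    nnnorm_prod, ENNReal.ofNNReal_finsetProd]
  calc ∏ j, ‖Khat b 2 (k j) (l j)‖ₑ
      ≤ ∏ j : Fin s, ((243 * b ^ 4 : ℝ≥0) : ℝ≥0∞) * (wt b (k j) * wt b (l j)) :=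
        Finset.prod_le_prod' fun j _ => enorm_Khat_two_le hb (k j) (l j)
    _ = _ := by rw [Finset.prod_mul_distrib, Finset.prod_const, Finset.card_fin]

lemma exists_tsum_enorm_KhatS_le (hb : b.Prime) (s : ℕ) {β : ℕ} (hβ : 2 ≤ β) :
    ∃ C : ℝ≥0, ∀ {g w : ℕ} {βe : ℕ → ℕ → ZMod b}, 0 < g → 0 < w → DistinctNodes βe (β * s) g →
      ∑' p : {k : Fin s → ℕ // ¬ ∀ j, k j < b ^ (β * (g * w))} ×
          {l : Fin s → ℕ // l ∈ csDual b s β g w βe ∧ l ≠ 0}, ‖KhatS b 2 s p.1.1 p.2.1‖ₑ ≤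
        C * (((g * w : ℕ) : ℝ≥0∞) ^ (2 * s + 1) * (b : ℝ≥0∞)⁻¹ ^ (g * w * (β + 2))) := by
  obtain ⟨C₁, outside_le⟩ := exists_tsum_wt_outside_box_le hb.one_lt s
  obtain ⟨C₂, dual_le⟩ := exists_tsum_wt_csDual_le hb s hβ
  refine ⟨(243 * b ^ 4) ^ s * C₁ * C₂ * (β + 1), fun {g w βe} hg hw hβe => ?_⟩
  specialize outside_le (β * (g * w))
  specialize dual_le hg hw hβe
  set m := g * w
  have hm : 1 ≤ m := Nat.mul_pos hg hw
  have box_le : ((β * m : ℕ) : ℝ≥0∞) + 1 ≤ (β + 1) * m := by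
    norm_cast
    linarith
  calc
    _ ≤ ∑' p : {k : Fin s → ℕ // ¬ ∀ j, k j < b ^ (β * m)} ×
          {l : Fin s → ℕ // l ∈ csDual b s β g w βe ∧ l ≠ 0},
        (((243 * b ^ 4) ^ s : ℝ≥0) : ℝ≥0∞) *
          ((∏ j, wt b (p.1.1 j)) * ∏ j, wt b (p.2.1 j)) :=
      ENNReal.tsum_le_tsum fun p => enorm_KhatS_two_le hb.one_lt p.1.1 p.2.1
    _ = ((243 * b ^ 4) ^ s : ℝ≥0) *
        ((∑' k : {k : Fin s → ℕ // ¬ ∀ j, k j < b ^ (β * m)}, ∏ j, wt b (k.1 j)) *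
          ∑' l : {l : Fin s → ℕ // l ∈ csDual b s β g w βe ∧ l ≠ 0}, ∏ j, wt b (l.1 j)) := by
      simp only [ENNReal.tsum_prod', ENNReal.tsum_mul_left, ENNReal.tsum_mul_right]
    _ ≤ ((243 * b ^ 4) ^ s : ℝ≥0) * ((C₁ * (((β + 1) * m) * (b : ℝ≥0∞)⁻¹ ^ (β * m))) *
        (C₂ * ((m : ℝ≥0∞) ^ (2 * s) * (b : ℝ≥0∞)⁻¹ ^ (2 * m)))) := by
      gcongr
      exact outside_le.trans (by gcongr)
    _ = _ := by
      rw [show m * (β + 2) = β * m + 2 * m by ring]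
      push_cast
      ring

lemma summable_norm_and_tsum_norm_le {ι E : Type*} [SeminormedAddCommGroup E] {f : ι → E} {c : ℝ}
    (hc : 0 ≤ c) (h : ∑' i, ‖f i‖ₑ ≤ ENNReal.ofReal c) :
    Summable (fun i => ‖f i‖) ∧ ∑' i, ‖f i‖ ≤ c := by
  have summable : Summable fun i => ‖f i‖ :=
    tsum_enorm_ne_top_iff_summable_norm.1 (ne_top_of_le_ne_top ENNReal.ofReal_ne_top h)
  refine ⟨summable, (ENNReal.ofReal_le_ofReal_iff hc).1 ?_⟩
  rw [ENNReal.ofReal_tsum_of_nonneg (fun i => norm_nonneg _) summable]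
  simpa only [ofReal_norm] using h

theorem discretization_part_bound_two_general (hb : b.Prime) (s : ℕ) {β : ℕ} (hβ : 2 ≤ β) :
    ∃ A : ℝ, 0 < A ∧ ∀ {g w : ℕ} {βe : ℕ → ℕ → ZMod b}, 0 < g → 0 < w →
      DistinctNodes βe (β * s) g →
      Summable (fun p : {k : Fin s → ℕ // ¬ ∀ j, k j < b ^ (β * (g * w))} ×
        {l : Fin s → ℕ // l ∈ csDual b s β g w βe ∧ l ≠ 0} => ‖KhatS b 2 s p.1.1 p.2.1‖) ∧
      (∑' p : {k : Fin s → ℕ // ¬ ∀ j, k j < b ^ (β * (g * w))} ×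
          {l : Fin s → ℕ // l ∈ csDual b s β g w βe ∧ l ≠ 0}, ‖KhatS b 2 s p.1.1 p.2.1‖) ≤
        A * Real.log ((b : ℝ) ^ (g * w)) ^ (2 * s + 1) / ((b : ℝ) ^ (g * w)) ^ (β + 2) := by
  obtain ⟨C, hC⟩ := exists_tsum_enorm_KhatS_le hb s hβ
  have hb' : (0 : ℝ) < b := by exact_mod_cast hb.pos
  have hlog : 0 < Real.log b := Real.log_pos (by exact_mod_cast hb.one_lt)
  refine ⟨(C + 1) / Real.log b ^ (2 * s + 1), by positivity, fun {g w βe} hg hw hβe => ?_⟩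
  have bound_eq : (C + 1) / Real.log b ^ (2 * s + 1) * Real.log ((b : ℝ) ^ (g * w)) ^ (2 * s + 1) /
      ((b : ℝ) ^ (g * w)) ^ (β + 2) =
        (C + 1) * ((g * w : ℕ) ^ (2 * s + 1) * (b : ℝ)⁻¹ ^ (g * w * (β + 2))) := by
    rw [Real.log_pow, mul_pow, ← pow_mul, inv_pow]
    field_simp
  rw [bound_eq]
  refine summable_norm_and_tsum_norm_le (by positivity) ((hC hg hw hβe).trans ?_)
  rw [ENNReal.ofReal_mul (by positivity), ENNReal.ofReal_mul (by positivity),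
    ENNReal.ofReal_pow (by positivity), ENNReal.ofReal_pow (by positivity),
    ENNReal.ofReal_inv_of_pos hb', ENNReal.ofReal_natCast, ENNReal.ofReal_natCast,
    ENNReal.ofReal_add (by positivity) zero_le_one, ENNReal.ofReal_coe_nnreal]
  gcongr
  exact le_self_add

end Assembly

/-- Proposition 2: the discretization part, `α = 2`. Under the
assumptions of the main theorem with `α = 2`, there is `A > 0` such that for all `w`, the
digital net `P` of the paper's construction with `N = b^{gw}` points satisfies
`∑_{k ∉ {0,…,b^{βgw}-1}^s} ∑_{l ∈ P∞⊥\{0}} |K̂_{2,s}(k,l)| ≤ A (log N)^{2s+1} / N^{6}`. -/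
theorem discretization_part_bound_two
    (b s β g : ℕ) (hb : b.Prime) (hs : 0 < s) (hβ : 4 ≤ β)
    (hg1 : 4 * s ≤ g) (hg2 : s * (β - 1) / 2 ≤ g) (hbs : β * g * s ≤ b)
    (βe : ℕ → ℕ → ZMod b)
    (hdist : ∀ j l j' l', j < β * s → l < g → j' < β * s → l' < g →
      βe j l = βe j' l' → j = j' ∧ l = l') :
    ∃ A : ℝ, 0 < A ∧ ∀ w : ℕ, 0 < w →
      (∑' p : {k : Fin s → ℕ // ¬ ∀ j, k j < b ^ (β * (g * w))} ×
          {l : Fin s → ℕ //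
            l ∈ dualNetInf b (interlace β s (g * w) fun j => csMatrix b w (g * w) (βe j.1)) ∧
            l ≠ 0},
          ‖KhatS b 2 s p.1.1 p.2.1‖) ≤
        A * Real.log ((b : ℝ) ^ (g * w)) ^ (2 * s + 1) / ((b : ℝ) ^ (g * w)) ^ 6 := by
  obtain ⟨A, hA, bound⟩ := discretization_part_bound_two_general hb s (by omega : 2 ≤ β)
  refine ⟨A, hA, fun w hw => (bound (by omega) hw hdist).2.trans ?_⟩
  have one_le : (1 : ℝ) ≤ b ^ (g * w) := one_le_pow₀ (by exact_mod_cast hb.one_le)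
  have := Real.log_nonneg one_le
  gcongr
  omega
end

section
/- Let b be a prime, α ∈ ℕ with α ≥ 3, and n ∈ ℕ. With S_1 := ∑_{k=0}^{∞} b^{−μ_α(k)} and S_{2,n} := ∑_{k=0}^{b^n−1} b^{−μ_α(k)}, one has S_1 − S_{2,n} ≤ B_{α,b} / b^n, where B_{α,b} := ∑_{v=1}^{α−1} ∏_{i=1}^{v−1} (b−1)/(b^i−1) + ((b^{α−1}−1)/(b^{α−1}−b)) · ∏_{i=1}^{α−1} (b−1)/(b^i−1) (empty products equal 1). -/
/-!
Let `T_β(m) = ∑_{k < b^m} x^{μ_β(k)}`. Splitting off the leading digit of `k` gives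
`T_{β+1}(m+1) = T_{β+1}(m) + (b-1) x^{m+1} T_β(m)`, where `T_0(m) = b^m`. For the generating
functions `G_β(y) = ∑_m T_β(m) y^m` this reads `(1-y) G_{β+1}(y) = 1 + (b-1) x y G_β(x y)`, which
makes `D_β(y) = (1-y) G_β(y)` explicit. Summing the recursion over all `m` instead gives
`∑_k x^{μ_{β+1}(k)} = 1 + (b-1) x G_β(x) = D_{β+1}(1)` whenever `b x^{β+1} < 1`.

The tail consists of the numbers with leading digit at position `m ≥ n`, which contribute
`(b-1) x^{m+1} T_{α-1}(m) ≤ (b-1) x^{m+1} D_{α-1}(1)`, a geometric series. At `x = 1/b` the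
constant `D_{α-1}(1)` is `B_{α,b}`.
-/

open scoped BigOperators

open Filter Topology

/-! ### Sums and series -/

lemma sum_range_mul_eq_sum_sum {M : Type*} [AddCommMonoid M] (f : ℕ → M) (a c : ℕ) :
    ∑ k ∈ Finset.range (a * c), f k
      = ∑ i ∈ Finset.range a, ∑ j ∈ Finset.range c, f (i * c + j) := by
  induction a with
  | zero => simp
  | succ a ih => rw [Nat.succ_mul, Finset.sum_range_add, ih, Finset.sum_range_succ]

lemma hasSum_of_tendsto_sum_range_comp {f : ℕ → ℝ} {φ : ℕ → ℕ} {S : ℝ} (hf : ∀ k, 0 ≤ f k)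
    (hφ : Tendsto φ atTop atTop)
    (h : Tendsto (fun m => ∑ k ∈ Finset.range (φ m), f k) atTop (𝓝 S)) : HasSum f S := by
  have hmono : Monotone fun N => ∑ k ∈ Finset.range N, f k := fun M N hMN =>
    Finset.sum_le_sum_of_subset_of_nonneg (Finset.range_mono hMN) fun k _ _ => hf k
  rw [hasSum_iff_tendsto_nat_of_nonneg hf]
  exact (tendsto_iff_tendsto_subseq_of_monotone hmono hφ).mpr h

lemma hasSum_of_linear_recurrence {f g : ℕ → ℝ} {y G : ℝ} (hf : ∀ m, 0 ≤ f m)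
    (hg : ∀ m, 0 ≤ g m) (hy : y < 1) (hrec : ∀ m, f (m + 1) = y * f m + g m)
    (hG : HasSum g G) : HasSum f ((f 0 + G) / (1 - y)) := by
  have hy' : 0 < 1 - y := sub_pos.mpr hy
  have hbound (M : ℕ) : ∑ m ∈ Finset.range M, f m ≤ (f 0 + G) / (1 - y) := by
    have hshift : ∑ m ∈ Finset.range (M + 1), f m
        = y * ∑ m ∈ Finset.range M, f m + ∑ m ∈ Finset.range M, g m + f 0 := by
      simp only [Finset.sum_range_succ', hrec, Finset.sum_add_distrib, Finset.mul_sum]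
    rw [Finset.sum_range_succ] at hshift
    rw [le_div_iff₀ hy']
    linarith [hf M, sum_le_hasSum (Finset.range M) (fun m _ => hg m) hG]
  have hsummable : Summable f := summable_of_sum_range_le hf hbound
  have hfixed : ∑' m, f m = f 0 + (y * ∑' m, f m + G) := by
    conv_lhs => rw [hsummable.tsum_eq_zero_add]
    simp only [hrec]
    rw [((hsummable.hasSum.mul_left y).add hG).tsum_eq]
  convert hsummable.hasSum using 1
  rw [div_eq_iff hy'.ne']
  linarith

/-! ### The Dick metric and the leading digit -/

section LeadingDigit

variable {b : ℕ}

lemma bdigit_eq_zero_of_lt_pow {k i : ℕ} (h : k < b ^ i) : bdigit b k i = 0 := by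
  rw [bdigit, Nat.div_eq_of_lt h, Nat.zero_mod]

lemma mem_bsupp (hb : 1 < b) {k i : ℕ} : i ∈ bsupp b k ↔ bdigit b k i ≠ 0 := by
  rw [bsupp, Finset.mem_filter, Finset.mem_range, and_iff_right_iff_imp]
  contrapose!
  intro hki
  exact bdigit_eq_zero_of_lt_pow ((Nat.lt_of_succ_le hki).trans (Nat.lt_pow_self hb))

lemma lt_of_mem_bsupp (hb : 1 < b) {m r i : ℕ} (hr : r < b ^ m) (hi : i ∈ bsupp b r) :
    i < m := by
  contrapose! hi
  rw [mem_bsupp hb, not_not]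
  exact bdigit_eq_zero_of_lt_pow (hr.trans_le (Nat.pow_le_pow_right hb.le hi))

lemma bdigit_mul_pow_add_of_lt (c r : ℕ) {i m : ℕ} (hb : 0 < b) (hi : i < m) :
    bdigit b (c * b ^ m + r) i = bdigit b r i := by
  obtain ⟨d, rfl⟩ := Nat.exists_eq_add_of_lt hi
  have hsplit : c * b ^ (i + d + 1) + r = r + b ^ i * (b * (c * b ^ d)) := by ring
  rw [bdigit, bdigit, hsplit, Nat.add_mul_div_left _ _ (pow_pos hb i), Nat.add_mul_mod_self_left]

lemma bdigit_mul_pow_add_self {c r m : ℕ} (hc : c < b) (hr : r < b ^ m) :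
    bdigit b (c * b ^ m + r) m = c := by
  rw [bdigit, mul_comm, Nat.mul_add_div (Nat.zero_lt_of_lt hr), Nat.div_eq_of_lt hr, add_zero,
    Nat.mod_eq_of_lt hc]

lemma mul_pow_add_lt_pow_succ {c r m : ℕ} (hc : c < b) (hr : r < b ^ m) :
    c * b ^ m + r < b ^ (m + 1) :=
  calc c * b ^ m + r < (c + 1) * b ^ m := by rw [add_mul, one_mul]; gcongr
    _ ≤ b * b ^ m := by gcongr; exact hc
    _ = b ^ (m + 1) := (pow_succ' b m).symm

lemma bsupp_mul_pow_add {c r m : ℕ} (hb : 1 < b) (hc₀ : c ≠ 0) (hc : c < b) (hr : r < b ^ m) :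
    bsupp b (c * b ^ m + r) = insert m (bsupp b r) := by
  ext i
  rw [Finset.mem_insert, mem_bsupp hb, mem_bsupp hb]
  rcases lt_trichotomy i m with hi | rfl | hi
  · simp only [bdigit_mul_pow_add_of_lt c r (Nat.zero_lt_of_lt hb) hi, hi.ne, false_or]
  · simp only [bdigit_mul_pow_add_self hc hr, ne_eq, hc₀, not_false_eq_true, true_or]
  · have hpow : b ^ (m + 1) ≤ b ^ i := Nat.pow_le_pow_right hb.le hi
    have hk : c * b ^ m + r < b ^ i := (mul_pow_add_lt_pow_succ hc hr).trans_le hpow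
    have hr' : r < b ^ i := (Nat.le_add_left r _).trans_lt hk
    simp only [bdigit_eq_zero_of_lt_pow hk, bdigit_eq_zero_of_lt_pow hr', hi.ne', ne_eq,
      not_true_eq_false, or_false]

lemma reverse_sort_le {ι : Type*} [LinearOrder ι] (s : Finset ι) :
    (s.sort (· ≤ ·)).reverse = s.sort (· ≥ ·) := by
  refine List.Perm.eq_of_pairwise' (r := (· ≥ ·)) ?_ (s.pairwise_sort _) ?_
  · exact List.pairwise_reverse.mpr (s.pairwise_sort (· ≤ ·))
  · exact (List.reverse_perm _).trans
      ((s.sort_perm_toList _).trans (s.sort_perm_toList _).symm)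

lemma dick_mul_pow_add {c r m : ℕ} (hb : 1 < b) (β : ℕ) (hc₀ : c ≠ 0) (hc : c < b)
    (hr : r < b ^ m) : dick b (β + 1) (c * b ^ m + r) = (m + 1) + dick b β r := by
  have hlt (i : ℕ) (hi : i ∈ bsupp b r) : i < m := lt_of_mem_bsupp hb hr hi
  have hsort : (insert m (bsupp b r)).sort (· ≥ ·) = m :: (bsupp b r).sort (· ≥ ·) :=
    Finset.sort_insert _ (fun i hi => (hlt i hi).le) fun hm => (hlt m hm).false
  rw [dick, dick, reverse_sort_le, reverse_sort_le, bsupp_mul_pow_add hb hc₀ hc hr, hsort,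
    List.take_succ_cons, List.map_cons, List.sum_cons]

end LeadingDigit

/-! ### Sums over `k < b ^ m` -/

/-- The partial sum `T_β(m) = ∑_{k < b^m} x^{μ_β(k)}` of the series of the theorem, which has
`x = 1/b`. -/
def dickSum {R : Type*} [Semiring R] (x : R) (b β m : ℕ) : R :=
  ∑ k ∈ Finset.range (b ^ m), x ^ dick b β k

lemma dickSum_zero_left {R : Type*} [Semiring R] (x : R) (b m : ℕ) :
    dickSum x b 0 m = (b : R) ^ m := by
  simp [dickSum, dick]

lemma dickSum_zero_right {R : Type*} [Semiring R] (x : R) (b β : ℕ) : dickSum x b β 0 = 1 := by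
  simp [dickSum, dick, bsupp, bdigit]

lemma dickSum_nonneg {x : ℝ} (hx : 0 ≤ x) (b β m : ℕ) : 0 ≤ dickSum x b β m :=
  Finset.sum_nonneg fun _ _ => pow_nonneg hx _

lemma sum_pow_dick_mul_pow_add {R : Type*} [Semiring R] (x : R) {b c : ℕ} (hb : 1 < b)
    (hc₀ : c ≠ 0) (hc : c < b) (β m : ℕ) :
    ∑ r ∈ Finset.range (b ^ m), x ^ dick b (β + 1) (c * b ^ m + r)
      = x ^ (m + 1) * dickSum x b β m := by
  rw [dickSum, Finset.mul_sum]
  refine Finset.sum_congr rfl fun r hr => ?_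
  rw [dick_mul_pow_add hb β hc₀ hc (Finset.mem_range.mp hr), pow_add]

lemma dickSum_succ {R : Type*} [Ring R] (x : R) {b : ℕ} (hb : 1 < b) (β m : ℕ) :
    dickSum x b (β + 1) (m + 1)
      = dickSum x b (β + 1) m + ((b : R) - 1) * x ^ (m + 1) * dickSum x b β m := by
  obtain ⟨d, rfl⟩ := Nat.exists_eq_add_of_lt (Nat.zero_lt_of_lt hb)
  have hleading (c : ℕ) (hc : c ∈ Finset.range (0 + d)) :=
    sum_pow_dick_mul_pow_add x hb c.succ_ne_zero
      (Nat.succ_lt_succ (Finset.mem_range.mp hc)) β m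
  rw [dickSum, pow_succ', sum_range_mul_eq_sum_sum, Finset.sum_range_succ',
    Finset.sum_congr rfl hleading, Finset.sum_const, Finset.card_range, nsmul_eq_mul]
  simp only [zero_mul, zero_add, Nat.cast_add, Nat.cast_one, add_sub_cancel_right, mul_assoc,
    dickSum]
  rw [add_comm]

lemma dickSum_eq_one_add_sum {R : Type*} [Ring R] (x : R) {b : ℕ} (hb : 1 < b) (β m : ℕ) :
    dickSum x b (β + 1) m
      = 1 + ∑ i ∈ Finset.range m, ((b : R) - 1) * x ^ (i + 1) * dickSum x b β i := by
  induction m with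
  | zero => rw [dickSum_zero_right, Finset.sum_range_zero, add_zero]
  | succ m ih => rw [dickSum_succ x hb, ih, Finset.sum_range_succ, add_assoc]

/-! ### The generating function -/

/-- The weight `∑_{1 ≤ c < b} ∑_{j ≥ 1} t^j = (b-1) t / (1-t)` of one nonzero digit; at
`t = b^{-i}` it is the factor `(b-1)/(b^i-1)` of `B_{α,b}`. -/
noncomputable def digitWeight (b : ℕ) (t : ℝ) : ℝ := ((b : ℝ) - 1) * t / (1 - t)

/-- The closed form `D_β(y)` of `(1-y) ∑_m T_β(m) y^m`, where `T_β` is `dickSum x b β`; at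
`y = 1` it is the value of `∑_k x^{μ_β(k)}`. The formula is meaningful only for `b x^β y < 1`,
where these series converge. -/
noncomputable def dickClosedForm (x y : ℝ) (b β : ℕ) : ℝ :=
  ∑ v ∈ Finset.range β, ∏ i ∈ Finset.range v, digitWeight b (x ^ (i + 1) * y)
    + (1 - x ^ β * y) / (1 - b * (x ^ β * y)) *
      ∏ i ∈ Finset.range β, digitWeight b (x ^ (i + 1) * y)

section GeneratingFunction

variable {b : ℕ} {x y : ℝ}

lemma digitWeight_inv (b : ℕ) {u : ℝ} (hu : u ≠ 0) :
    digitWeight b u⁻¹ = ((b : ℝ) - 1) / (u - 1) := by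
  rw [digitWeight, ← mul_div_mul_right _ _ hu, mul_assoc, inv_mul_cancel₀ hu, mul_one, sub_mul,
    one_mul, inv_mul_cancel₀ hu]

lemma dickClosedForm_zero (x y : ℝ) (b : ℕ) :
    dickClosedForm x y b 0 = (1 - y) / (1 - b * y) := by
  simp [dickClosedForm]

lemma dickClosedForm_succ (x y : ℝ) (b β : ℕ) :
    dickClosedForm x y b (β + 1)
      = 1 + digitWeight b (x * y) * dickClosedForm x (x * y) b β := by
  have hpow (i : ℕ) : x ^ (i + 1) * y = x ^ i * (x * y) := by rw [pow_succ, mul_assoc]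
  simp only [dickClosedForm, Finset.sum_range_succ', Finset.prod_range_succ', hpow,
    Finset.prod_range_zero, ← Finset.sum_mul, pow_zero, one_mul]
  ring

theorem hasSum_pow_mul_dickSum (hb : 1 < b) (hx₀ : 0 ≤ x) (hx₁ : x ≤ 1) {β : ℕ} (hy₀ : 0 ≤ y)
    (hy₁ : y < 1) (hβ : b * (x ^ β * y) < 1) :
    HasSum (fun m => y ^ m * dickSum x b β m) (dickClosedForm x y b β / (1 - y)) := by
  induction β generalizing y with
  | zero =>
    rw [pow_zero, one_mul] at hβ
    have hvalue : dickClosedForm x y b 0 / (1 - y) = (1 - b * y)⁻¹ := by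
      rw [dickClosedForm_zero, div_right_comm, div_self (sub_pos.mpr hy₁).ne', one_div]
    simp only [hvalue, dickSum_zero_left, ← mul_pow, mul_comm y]
    exact hasSum_geometric_of_lt_one (by positivity) hβ
  | succ β ih =>
    have hxy : x * y < 1 := (mul_le_of_le_one_left hy₀ hx₁).trans_lt hy₁
    have hb₁ : (0 : ℝ) ≤ b - 1 := sub_nonneg.mpr (Nat.one_le_cast.mpr hb.le)
    have hinner := (ih (mul_nonneg hx₀ hy₀) hxy
      (by rwa [← mul_assoc (x ^ β), ← pow_succ])).mul_left (((b : ℝ) - 1) * (x * y))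
    have hrec (m : ℕ) : y ^ (m + 1) * dickSum x b (β + 1) (m + 1)
        = y * (y ^ m * dickSum x b (β + 1) m)
          + ((b : ℝ) - 1) * (x * y) * ((x * y) ^ m * dickSum x b β m) := by
      rw [dickSum_succ x hb]
      ring
    have houter := hasSum_of_linear_recurrence
      (fun m => mul_nonneg (pow_nonneg hy₀ m) (dickSum_nonneg hx₀ b (β + 1) m))
      (fun m => mul_nonneg (by positivity)
        (mul_nonneg (by positivity) (dickSum_nonneg hx₀ b β m))) hy₁ hrec hinner
    convert houter using 2
    rw [dickClosedForm_succ, digitWeight, pow_zero, dickSum_zero_right, one_mul,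
      div_mul_eq_mul_div, mul_div_assoc]

end GeneratingFunction

/-! ### The series and its tail -/

section Tail

variable {b : ℕ} {x : ℝ}

lemma lt_one_of_mul_pow_lt_one (hb : 1 ≤ b) {β : ℕ} (hβ : b * x ^ β < 1) : x < 1 := by
  contrapose! hβ
  exact one_le_mul_of_one_le_of_one_le (Nat.one_le_cast.mpr hb) (one_le_pow₀ hβ)

lemma hasSum_mul_pow_succ_mul_dickSum (hb : 1 < b) (hx₀ : 0 ≤ x) {β : ℕ}
    (hβ : b * x ^ (β + 1) < 1) :
    HasSum (fun m => ((b : ℝ) - 1) * x ^ (m + 1) * dickSum x b β m)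
      (dickClosedForm x 1 b (β + 1) - 1) := by
  have hx₁ : x < 1 := lt_one_of_mul_pow_lt_one hb.le hβ
  have hmoment := (hasSum_pow_mul_dickSum hb hx₀ hx₁.le hx₀ hx₁
    (by rwa [← pow_succ])).mul_left (((b : ℝ) - 1) * x)
  have hterm (m : ℕ) : ((b : ℝ) - 1) * x * (x ^ m * dickSum x b β m)
      = ((b : ℝ) - 1) * x ^ (m + 1) * dickSum x b β m := by ring
  have hvalue : ((b : ℝ) - 1) * x * (dickClosedForm x x b β / (1 - x))
      = dickClosedForm x 1 b (β + 1) - 1 := by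
    rw [dickClosedForm_succ, digitWeight, mul_one]
    ring
  simpa only [hterm, hvalue] using hmoment

theorem hasSum_pow_dick (hb : 1 < b) (hx₀ : 0 ≤ x) {β : ℕ} (hβ : b * x ^ β < 1) :
    HasSum (fun k => x ^ dick b β k) (dickClosedForm x 1 b β) := by
  obtain _ | β := β
  · rw [pow_zero, mul_one, Nat.cast_lt_one] at hβ
    omega
  refine hasSum_of_tendsto_sum_range_comp (fun k => pow_nonneg hx₀ _)
    (tendsto_pow_atTop_atTop_of_one_lt hb) ?_
  have hlim := (hasSum_mul_pow_succ_mul_dickSum hb hx₀ hβ).tendsto_sum_nat.const_add 1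
  rw [add_sub_cancel] at hlim
  exact hlim.congr fun m => (dickSum_eq_one_add_sum x hb β m).symm

lemma dickSum_le_dickClosedForm (hb : 1 < b) (hx₀ : 0 ≤ x) {β : ℕ}
    (hβ : b * x ^ β < 1) (m : ℕ) : dickSum x b β m ≤ dickClosedForm x 1 b β :=
  sum_le_hasSum _ (fun _ _ => pow_nonneg hx₀ _) (hasSum_pow_dick hb hx₀ hβ)

theorem tsum_pow_dick_sub_dickSum_le (hb : 1 < b) (hx₀ : 0 ≤ x) {β : ℕ}
    (hβ : b * x ^ β < 1) (n : ℕ) :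
    ∑' k, x ^ dick b (β + 1) k - dickSum x b (β + 1) n
      ≤ digitWeight b x * dickClosedForm x 1 b β * x ^ n := by
  have hx₁ : x < 1 := lt_one_of_mul_pow_lt_one hb.le hβ
  have hb₁ : (0 : ℝ) ≤ b - 1 := sub_nonneg.mpr (Nat.one_le_cast.mpr hb.le)
  have hβ' : b * x ^ (β + 1) < 1 :=
    (mul_le_mul_of_nonneg_left (pow_le_pow_of_le_one hx₀ hx₁.le β.le_succ)
      b.cast_nonneg).trans_lt hβ
  have htail := (hasSum_nat_add_iff' n).mpr (hasSum_mul_pow_succ_mul_dickSum hb hx₀ hβ')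
  have hgeom := (hasSum_geometric_of_lt_one hx₀ hx₁).mul_left
    (((b : ℝ) - 1) * x ^ (n + 1) * dickClosedForm x 1 b β)
  rw [(hasSum_pow_dick hb hx₀ hβ').tsum_eq, dickSum_eq_one_add_sum x hb, ← sub_sub]
  refine (hasSum_le (fun i => ?_) htail hgeom).trans_eq ?_
  · calc ((b : ℝ) - 1) * x ^ (i + n + 1) * dickSum x b β (i + n)
        ≤ ((b : ℝ) - 1) * x ^ (i + n + 1) * dickClosedForm x 1 b β := by
          gcongr
          exact dickSum_le_dickClosedForm hb hx₀ hβ (i + n)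
      _ = ((b : ℝ) - 1) * x ^ (n + 1) * dickClosedForm x 1 b β * x ^ i := by ring
  · rw [digitWeight]
    ring

end Tail

lemma dickClosedForm_inv_one {b : ℕ} (hb : b ≠ 0) (β : ℕ) : dickClosedForm (b : ℝ)⁻¹ 1 b β
    = ∑ v ∈ Finset.Icc 1 β, ∏ i ∈ Finset.Icc 1 (v - 1), ((b : ℝ) - 1) / ((b : ℝ) ^ i - 1)
      + (((b : ℝ) ^ β - 1) / ((b : ℝ) ^ β - (b : ℝ))) *
          ∏ i ∈ Finset.Icc 1 β, ((b : ℝ) - 1) / ((b : ℝ) ^ i - 1) := by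
  have hpow (i : ℕ) : (b : ℝ) ^ i ≠ 0 := pow_ne_zero i (Nat.cast_ne_zero.mpr hb)
  have hfactor : (1 - ((b : ℝ) ^ β)⁻¹) / (1 - b * ((b : ℝ) ^ β)⁻¹)
      = ((b : ℝ) ^ β - 1) / ((b : ℝ) ^ β - b) := by
    rw [← mul_div_mul_right _ _ (hpow β), sub_mul, sub_mul, mul_assoc, inv_mul_cancel₀ (hpow β),
      one_mul, mul_one]
  simp only [dickClosedForm, mul_one, inv_pow, hfactor, digitWeight_inv b (hpow _),
    ← Finset.Ico_add_one_right_eq_Icc, Finset.sum_Ico_eq_sum_range,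
    Finset.prod_Ico_eq_prod_range, Nat.add_sub_cancel, add_comm 1]

theorem tail_sum_bound_general (b α n : ℕ) (hb : 1 < b) (hα : 3 ≤ α) :
    (∑' k : ℕ, (b : ℝ) ^ (-(dick b α k : ℝ))) -
      ∑ k ∈ Finset.range (b ^ n), (b : ℝ) ^ (-(dick b α k : ℝ)) ≤
    (∑ v ∈ Finset.Icc 1 (α - 1),
        ∏ i ∈ Finset.Icc 1 (v - 1), ((b : ℝ) - 1) / ((b : ℝ) ^ i - 1)
      + (((b : ℝ) ^ (α - 1) - 1) / ((b : ℝ) ^ (α - 1) - (b : ℝ))) *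
          ∏ i ∈ Finset.Icc 1 (α - 1), ((b : ℝ) - 1) / ((b : ℝ) ^ i - 1)) / (b : ℝ) ^ n := by
  obtain ⟨β, rfl⟩ := Nat.exists_eq_add_of_le' hα
  have hb₁ : (1 : ℝ) < b := Nat.one_lt_cast.mpr hb
  have hb₀ : (b : ℝ) ≠ 0 := (zero_lt_one.trans hb₁).ne'
  have hconv : (b : ℝ) * (b : ℝ)⁻¹ ^ (β + 2) < 1 := by
    rw [pow_succ', mul_inv_cancel_left₀ hb₀]
    exact pow_lt_one₀ (by positivity) (inv_lt_one_of_one_lt₀ hb₁) β.succ_ne_zero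
  have hweight : digitWeight b (b : ℝ)⁻¹ = 1 := by
    rw [digitWeight_inv b hb₀, div_self (sub_pos.mpr hb₁).ne']
  have htail := tsum_pow_dick_sub_dickSum_le hb (by positivity) hconv n
  rw [hweight, one_mul, dickClosedForm_inv_one (Nat.cast_ne_zero.mp hb₀), inv_pow,
    ← div_eq_mul_inv] at htail
  simp only [Real.rpow_neg b.cast_nonneg, Real.rpow_natCast, ← inv_pow]
  exact htail

/-- For a prime `b`, `α ≥ 3` and `n ∈ ℕ`, with `S_1 = ∑_{k≥0} b^{-μ_α(k)}`
and `S_{2,n} = ∑_{k<b^n} b^{-μ_α(k)}`, one has `S_1 - S_{2,n} ≤ B_{α,b}/b^n` where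
`B_{α,b} = ∑_{v=1}^{α-1} ∏_{i=1}^{v-1} (b-1)/(b^i-1)
  + ((b^{α-1}-1)/(b^{α-1}-b)) ∏_{i=1}^{α-1} (b-1)/(b^i-1)`. -/
theorem tail_sum_bound (b α n : ℕ) (hb : b.Prime) (hα : 3 ≤ α) (hn : 0 < n) :
    (∑' k : ℕ, (b : ℝ) ^ (-(dick b α k : ℝ))) -
      ∑ k ∈ Finset.range (b ^ n), (b : ℝ) ^ (-(dick b α k : ℝ)) ≤
    (∑ v ∈ Finset.Icc 1 (α - 1),
        ∏ i ∈ Finset.Icc 1 (v - 1), ((b : ℝ) - 1) / ((b : ℝ) ^ i - 1)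
      + (((b : ℝ) ^ (α - 1) - 1) / ((b : ℝ) ^ (α - 1) - (b : ℝ))) *
          ∏ i ∈ Finset.Icc 1 (α - 1), ((b : ℝ) - 1) / ((b : ℝ) ^ i - 1)) / (b : ℝ) ^ n :=
  tail_sum_bound_general b α n hb.one_lt hα
end

section
/- Let b ≥ 2 be an integer and v, n ∈ ℕ. Then ∑ b^{−(a_1 + ... + a_v)}, where the sum ranges over all integer tuples with a_1 > a_2 > ... > a_v > 0 and a_1 > n, is at most (1/(b^n (b−1))) · ∏_{i=1}^{v−1} 1/(b^i − 1) (empty product equal 1). -/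
open scoped BigOperators

/-!
Split off the largest entry: a tuple in the sum is determined by `a_1 > n` and by the strictly
decreasing positive tuple `(a_2, …, a_v)`. Forgetting the condition `a_1 > a_2` bounds the sum by
the product of `∑_{a > n} b^{-a} = 1 / (b^n (b - 1))` and the sum of `b^{-(a_1 + ⋯ + a_k)}` over all
strictly decreasing positive `k`-tuples, `k = v - 1`.

The latter equals `∏_{i=1}^k 1 / (b^i - 1)`, by induction on `k`: subtracting the smallest entry
`m + 1` of a `(k+1)`-tuple from all the others leaves a strictly decreasing positive `k`-tuple and
costs the factor `b^{-(k+1)(m+1)}`, which sums over `m ≥ 0` to `1 / (b^{k+1} - 1)`.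
-/

lemma inv_div_one_sub_inv {K : Type*} [Field K] {x : K} (hx : x ≠ 0) :
    x⁻¹ / (1 - x⁻¹) = 1 / (x - 1) := by
  rw [← mul_div_mul_left _ _ hx, mul_sub, mul_inv_cancel₀ hx, mul_one]

lemma hasSum_pow_add_of_norm_lt_one {K : Type*} [NormedDivisionRing K] {q : K} (hq : ‖q‖ < 1)
    (n : ℕ) : HasSum (fun m ↦ q ^ (n + m)) (q ^ n / (1 - q)) := by
  simpa only [pow_add, div_eq_mul_inv] using (hasSum_geometric_of_norm_lt_one hq).mul_left (q ^ n)

lemma summable_norm_pow_add_of_norm_lt_one {K : Type*} [NormedDivisionRing K] {q : K}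
    (hq : ‖q‖ < 1) (n : ℕ) : Summable fun m ↦ ‖q ^ (n + m)‖ := by
  simpa only [norm_pow] using
    (hasSum_pow_add_of_norm_lt_one (by rwa [norm_norm] : ‖‖q‖‖ < 1) n).summable

lemma norm_pow_lt_one {K : Type*} [NormedDivisionRing K] {q : K} (hq : ‖q‖ < 1) {n : ℕ}
    (hn : n ≠ 0) : ‖q ^ n‖ < 1 :=
  (norm_pow q n).trans_lt (pow_lt_one₀ (norm_nonneg q) hq hn)

lemma hasSum_mul_pow_add {ι K : Type*} [NormedDivisionRing K] {f : ι → K} {s q : K}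
    (hf : Summable fun i ↦ ‖f i‖) (hs : HasSum f s) (hq : ‖q‖ < 1) (n : ℕ) :
    HasSum (fun p : ι × ℕ ↦ f p.1 * q ^ (n + p.2)) (s * (q ^ n / (1 - q))) := by
  have hgeom := hasSum_pow_add_of_norm_lt_one hq n
  have hsummable := summable_mul_of_summable_norm' hf hs.summable
    (summable_norm_pow_add_of_norm_lt_one hq n) hgeom.summable
  exact (hs.mul hgeom hsummable :)

lemma strictAnti_snoc {α : Type*} [Preorder α] {k : ℕ} {a : Fin k → α} {c : α}
    (ha : StrictAnti a) (hc : ∀ i, c < a i) : StrictAnti (Fin.snoc a c : Fin (k + 1) → α) := by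
  intro i j hij
  obtain ⟨i, rfl⟩ := Fin.exists_castSucc_eq.2 (Fin.ne_last_of_lt hij)
  cases j using Fin.lastCases with
  | last => simpa only [Fin.snoc_castSucc, Fin.snoc_last] using hc i
  | cast j =>
    simpa only [Fin.snoc_castSucc] using ha (Fin.castSucc_lt_castSucc_iff.1 hij)

/-- The strictly decreasing `k`-tuples of positive integers, that is, the partitions into exactly
`k` distinct parts. -/
abbrev DecreasingTuple (k : ℕ) : Type := {a : Fin k → ℕ // StrictAnti a ∧ ∀ i, 0 < a i}

namespace DecreasingTuple

instance : Unique (DecreasingTuple 0) where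
  default := ⟨Fin.elim0, Subsingleton.strictAnti _, fun i ↦ i.elim0⟩
  uniq _ := Subtype.ext (Subsingleton.elim _ _)

variable {k : ℕ}

lemma last_lt_castSucc (t : DecreasingTuple (k + 1)) (i : Fin k) :
    t.1 (Fin.last k) < t.1 i.castSucc :=
  t.2.1 (Fin.castSucc_lt_last i)

/-- The decomposition of a strictly decreasing positive `(k + 1)`-tuple into its smallest entry
`m + 1` and the tuple obtained by subtracting `m + 1` from the other entries. -/
def addSnocEquiv (k : ℕ) : DecreasingTuple k × ℕ ≃ DecreasingTuple (k + 1) where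
  toFun p := ⟨Fin.snoc (fun i ↦ p.1.1 i + (p.2 + 1)) (p.2 + 1),
    strictAnti_snoc (p.1.2.1.add_const _) fun i ↦ Nat.lt_add_of_pos_left (p.1.2.2 i),
    Fin.lastCases (by simp) (by simp)⟩
  invFun t := ⟨⟨fun i ↦ t.1 i.castSucc - t.1 (Fin.last k),
    fun _ j hij ↦ Nat.sub_lt_sub_right (t.last_lt_castSucc j).le
      (t.2.1 (Fin.castSucc_lt_castSucc_iff.2 hij)),
    fun i ↦ Nat.sub_pos_of_lt (t.last_lt_castSucc i)⟩, t.1 (Fin.last k) - 1⟩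
  left_inv p := by simp
  right_inv t := by
    ext i
    have hpos := t.2.2 (Fin.last k)
    cases i using Fin.lastCases with
    | last => simp only [Fin.snoc_last]; omega
    | cast i =>
      have hlt := t.last_lt_castSucc i
      simp only [Fin.snoc_castSucc]
      omega

lemma pow_sum_addSnocEquiv {M : Type*} [Monoid M] (q : M) (p : DecreasingTuple k × ℕ) :
    q ^ ∑ i, (addSnocEquiv k p).1 i = q ^ (∑ i, p.1.1 i) * (q ^ (k + 1)) ^ (1 + p.2) := by
  rw [← pow_mul, ← pow_add, Fin.sum_univ_castSucc]
  congr 1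
  simp only [addSnocEquiv, Equiv.coe_fn_mk, Fin.snoc_castSucc, Fin.snoc_last,
    Finset.sum_add_distrib, Finset.sum_const, Finset.card_univ, Fintype.card_fin, smul_eq_mul]
  ring

lemma summable_norm_pow_sum {K : Type*} [NormedDivisionRing K] {q : K} (hq : ‖q‖ < 1) (k : ℕ) :
    Summable fun t : DecreasingTuple k ↦ ‖q ^ ∑ i, t.1 i‖ := by
  induction k with
  | zero => exact (hasSum_unique _).summable
  | succ k ih =>
    rw [← (addSnocEquiv k).summable_iff]
    simpa only [Function.comp_def, pow_sum_addSnocEquiv] using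
      ih.mul_norm (summable_norm_pow_add_of_norm_lt_one (norm_pow_lt_one hq k.succ_ne_zero) 1)

theorem hasSum_pow_sum {K : Type*} [NormedField K] {q : K} (hq : ‖q‖ < 1) (k : ℕ) :
    HasSum (fun t : DecreasingTuple k ↦ q ^ ∑ i, t.1 i)
      (∏ i ∈ Finset.Icc 1 k, q ^ i / (1 - q ^ i)) := by
  induction k with
  | zero => simp
  | succ k ih =>
    rw [Finset.prod_Icc_succ_top (by simp), ← (addSnocEquiv k).hasSum_iff]
    simpa only [Function.comp_def, pow_sum_addSnocEquiv, pow_one] using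
      hasSum_mul_pow_add (summable_norm_pow_sum hq k) ih (norm_pow_lt_one hq k.succ_ne_zero) 1

/-- The decomposition of a strictly decreasing positive tuple whose largest entry exceeds `n` into
the tuple of the remaining entries and the excess of the largest entry over `n + 1`. -/
def tailHead (n : ℕ) (t : {a : Fin (k + 1) → ℕ // StrictAnti a ∧ (∀ i, 0 < a i) ∧ n < a 0}) :
    DecreasingTuple k × ℕ :=
  (⟨Fin.tail t.1, t.2.1.comp_strictMono Fin.strictMono_succ, fun i ↦ t.2.2.1 i.succ⟩,
    t.1 0 - (n + 1))

lemma tailHead_injective (n : ℕ) : Function.Injective (tailHead (k := k) n) := by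
  intro s t hst
  obtain ⟨htail, hexcess⟩ : Fin.tail s.1 = Fin.tail t.1 ∧ s.1 0 - (n + 1) = t.1 0 - (n + 1) := by
    simpa only [tailHead, Prod.mk.injEq, Subtype.mk.injEq] using hst
  have hhead : s.1 0 = t.1 0 := tsub_inj_left s.2.2.2 t.2.2.2 hexcess
  rw [Subtype.ext_iff, ← Fin.cons_self_tail s.1, ← Fin.cons_self_tail t.1, hhead, htail]

lemma pow_sum_eq_tailHead {M : Type*} [Monoid M] (q : M) (n : ℕ)
    (t : {a : Fin (k + 1) → ℕ // StrictAnti a ∧ (∀ i, 0 < a i) ∧ n < a 0}) :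
    q ^ ∑ i, t.1 i = q ^ (∑ i, (tailHead n t).1.1 i) * q ^ (n + 1 + (tailHead n t).2) := by
  rw [← pow_add, Fin.sum_univ_succ, add_comm, tailHead, Nat.add_sub_cancel' t.2.2.2]
  rfl

theorem summable_and_tsum_pow_sum_le {q : ℝ} (hq₀ : 0 ≤ q) (hq₁ : q < 1) (k n : ℕ) :
    (Summable fun t : {a : Fin (k + 1) → ℕ // StrictAnti a ∧ (∀ i, 0 < a i) ∧ n < a 0} ↦
        q ^ ∑ i, t.1 i) ∧
      ∑' t : {a : Fin (k + 1) → ℕ // StrictAnti a ∧ (∀ i, 0 < a i) ∧ n < a 0}, q ^ ∑ i, t.1 i ≤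
        (∏ i ∈ Finset.Icc 1 k, q ^ i / (1 - q ^ i)) * (q ^ (n + 1) / (1 - q)) := by
  have hq : ‖q‖ < 1 := by rwa [Real.norm_of_nonneg hq₀]
  have hprod := hasSum_mul_pow_add (summable_norm_pow_sum hq k) (hasSum_pow_sum hq k) hq (n + 1)
  rw [funext (pow_sum_eq_tailHead q n), ← hprod.tsum_eq]
  exact ⟨hprod.summable.comp_injective (tailHead_injective n),
    tsum_comp_le_tsum_of_inj hprod.summable (fun _ ↦ by positivity) (tailHead_injective n)⟩

end DecreasingTuple

theorem decreasing_tuple_sum_bound_general {b : ℝ} (hb : 1 < b) {v : ℕ} (hv : 0 < v) (n : ℕ) :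
    (Summable fun t : {a : Fin v → ℕ // StrictAnti a ∧ (∀ i, 0 < a i) ∧ n < a ⟨0, hv⟩} ↦
        b ^ (-(∑ i, (t.1 i : ℝ)))) ∧
      (∑' t : {a : Fin v → ℕ // StrictAnti a ∧ (∀ i, 0 < a i) ∧ n < a ⟨0, hv⟩},
          b ^ (-(∑ i, (t.1 i : ℝ)))) ≤
        1 / (b ^ n * (b - 1)) * ∏ i ∈ Finset.Icc 1 (v - 1), 1 / (b ^ i - 1) := by
  obtain ⟨k, rfl⟩ := Nat.exists_eq_add_one.2 hv
  have hb₀ : 0 < b := one_pos.trans hb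
  have hterm (a : Fin (k + 1) → ℕ) : b ^ (-(∑ i, (a i : ℝ))) = b⁻¹ ^ ∑ i, a i := by
    rw [Real.rpow_neg hb₀.le, ← Nat.cast_sum, Real.rpow_natCast, inv_pow]
  have hfactor (i : ℕ) : 1 / (b ^ i - 1) = b⁻¹ ^ i / (1 - b⁻¹ ^ i) := by
    rw [inv_pow, inv_div_one_sub_inv (pow_pos hb₀ i).ne']
  have hhead : 1 / (b ^ n * (b - 1)) = b⁻¹ ^ (n + 1) / (1 - b⁻¹) := by
    rw [pow_succ, mul_div_assoc, inv_div_one_sub_inv hb₀.ne', inv_pow, one_div, one_div, mul_inv]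
  simp only [hterm, hfactor, hhead, mul_comm (b⁻¹ ^ (n + 1) / _)]
  exact DecreasingTuple.summable_and_tsum_pow_sum_le (inv_nonneg.2 hb₀.le)
    (inv_lt_one_of_one_lt₀ hb) k n

/-- For an integer `b ≥ 2` and `v, n ∈ ℕ`, the sum of `b^{-(a_1+⋯+a_v)}`
over all strictly decreasing tuples `a_1 > a_2 > ⋯ > a_v > 0` of positive integers with
`a_1 > n` is at most `(1/(b^n(b-1))) ∏_{i=1}^{v-1} 1/(b^i-1)`. -/
theorem decreasing_tuple_sum_bound (b v n : ℕ) (hb : 2 ≤ b) (hv : 0 < v) (hn : 0 < n) :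
    (∑' t : {a : Fin v → ℕ // StrictAnti a ∧ (∀ i, 0 < a i) ∧ n < a ⟨0, hv⟩},
        (b : ℝ) ^ (-(∑ i, (t.1 i : ℝ)))) ≤
      1 / ((b : ℝ) ^ n * ((b : ℝ) - 1)) *
        ∏ i ∈ Finset.Icc 1 (v - 1), 1 / ((b : ℝ) ^ i - 1) :=
  (decreasing_tuple_sum_bound_general (Nat.one_lt_cast.2 hb) hv n).2
end
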